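/- arXiv:2106.08949 — 2 statements merged into one kernel-verified Lean document; each statement's English description precedes it below -/
import Mathlib

section
/- Let d ≥ 1 be an integer, p ∈ [1,∞), and for λ > 0 let w(λ) be the weight sequence w_n(λ) = 1 + λ/n for n ≥ 1. Then the family (B_{w(λ₁)} × ⋯ × B_{w(λ_d)})_{λ∈(0,∞)^d} admits a common hypercyclic algebra on ℓp(ℕ)^d for the coordinatewise product. -/
open scoped ENNReal
open Finset

noncomputable section

/-- The space `ℓᵖ(ℕ)` of `p`-summable complex sequences. -/
abbrev lpC (p : ℝ≥0∞) : Type := lp (fun _ : ℕ => ℂ) p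

/-- `T` is the product operator `B_{w(lam 0)} × ⋯ × B_{w(lam (d-1))}` of weighted backward
shifts, the weight sequence of the `i`-th factor being `(w (lam i) n)_{n ≥ 1}`. -/
def IsProductShift (p : ℝ≥0∞) [Fact (1 ≤ p)] (d : ℕ) (w : ℝ → ℕ → ℝ)
    (T : (Fin d → lpC p) →L[ℂ] (Fin d → lpC p)) (lam : Fin d → ℝ) : Prop :=
  ∀ (v : Fin d → lpC p) (i : Fin d) (n : ℕ),
    (T v) i n = (w (lam i) (n + 1) : ℂ) * v i (n + 1)

/-- The family `T lam`, `lam ∈ S`, admits a common hypercyclic algebra for the coordinatewise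
product: there is a non-unital subalgebra `A ≠ {0}` of `(ℓᵖ(ℕ))^d` (closed under addition,
scalar multiplication and the componentwise coordinatewise product) every nonzero element of
which is a common hypercyclic vector for the family. -/
def CommonHypercyclicAlgebraCW (p : ℝ≥0∞) [Fact (1 ≤ p)] (d : ℕ) (S : Set (Fin d → ℝ))
    (T : (Fin d → ℝ) → ((Fin d → lpC p) →L[ℂ] (Fin d → lpC p))) : Prop :=
  ∃ A : Set (Fin d → lpC p),
    (0 : Fin d → lpC p) ∈ A ∧
    (∀ x ∈ A, ∀ y ∈ A, x + y ∈ A) ∧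
    (∀ (c : ℂ), ∀ x ∈ A, c • x ∈ A) ∧
    (∀ x ∈ A, ∀ y ∈ A, ∃ z ∈ A, ∀ (i : Fin d) (n : ℕ), z i n = x i n * y i n) ∧
    (∃ x ∈ A, x ≠ 0) ∧
    (∀ x ∈ A, x ≠ 0 → ∀ lam ∈ S, Dense (Set.range fun n : ℕ => ((T lam) ^ (n + 1)) x))

/-!
By a Baire category argument it suffices to solve, for countably many boxes of parameters, the
following problem: near a given finitely supported `x₀`, find `x` such that for every `λ` in the box
some iterate of `B_w(λ)` sends the power `x ^ m` close to a given `v` and all higher powers of `x`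
close to `0`. If `x` solves all these problems and `Q` is a polynomial without constant term whose
lowest term has degree `m`, then the iterates applied to `Q(x)` see only that term, so `Q(x)` is
hypercyclic.

To solve the problem on a box, choose in it a grid of `q = M ^ d` parameters `Λ_1, …, Λ_q` with mesh
of order `1 / M`, and let `x = x₀ + y`, where `y` has, in the block starting at `j R`, the `m`-th
root of the preimage of `v` under the `j R`-th iterate of the shift with parameter `Λ_j`. The
products `w_{k+1} ⋯ w_{k+n}` grow at least like `n ^ σ`, while changing the parameter by `δ` changes
them at most by the factor `exp (δ H_n)`, with `H_n ≈ log n` the harmonic number. So if `R` is a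
high power of `M`, then `y` is small, the `j R`-th iterate of the shift with a parameter within
`1 / M` of `Λ_j` maps block `j` almost to `v`, and the contributions of all later blocks and of all
higher powers are negligible.
-/

open Filter Topology

section PowerSelection

open Polynomial

variable {𝕜 E Θ : Type*} [NontriviallyNormedField 𝕜] [NormedAddCommGroup E] [NormedSpace 𝕜 E]
  (M : E →L[𝕜] E →L[𝕜] E)

/-- Reading `M x y` as a product `x * y`, so that `(M x ^ l) x` is the power `x ^ (l + 1)`, the
operator `S` sends the `(k + 1)`-st power of `x` `ε`-close to `v` and the powers with exponents in
`(k + 1, D + 1]` `ε`-close to `0`. -/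
def SelectsPower (S : E →L[𝕜] E) (k D : ℕ) (v : E) (ε : ℝ) (x : E) : Prop :=
  ‖S ((M x ^ k) x) - v‖ < ε ∧ ∀ l ∈ Ioc k D, ‖S ((M x ^ l) x)‖ < ε

variable {M} {k D : ℕ} {v x : E} {ε ε' C : ℝ}

lemma SelectsPower.congr_target {S : E →L[𝕜] E} {v' : E} (h : SelectsPower M S k D v ε x)
    (hv : ε + ‖v - v'‖ ≤ ε') : SelectsPower M S k D v' ε' x := by
  refine ⟨?_, fun l hl => (h.2 l hl).trans_le ((le_add_of_nonneg_right (norm_nonneg _)).trans hv)⟩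
  calc ‖S ((M x ^ k) x) - v'‖ ≤ ‖S ((M x ^ k) x) - v‖ + ‖v - v'‖ :=
        norm_sub_le_norm_sub_add_norm_sub ..
    _ < ε' := by linarith [h.1]

lemma SelectsPower.ne_zero {S : E →L[𝕜] E} (h : SelectsPower M S k D v ‖v‖ x) : x ≠ 0 := by
  rintro rfl
  simpa only [map_zero, zero_sub, norm_neg, lt_irrefl] using h.1

lemma eventually_selectsPower (hε : ε < ε') : ∀ᶠ y in 𝓝 x, ∀ S : E →L[𝕜] E, ‖S‖ ≤ C →
    SelectsPower M S k D v ε x → SelectsPower M S k D v ε' y := by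
  have hcont (l : ℕ) : Continuous fun y => (M y ^ l) y :=
    (M.continuous.pow l).clm_apply continuous_id
  have hδ : 0 < (ε' - ε) / (|C| + 1) := div_pos (sub_pos.2 hε) (by positivity)
  have hclose : ∀ᶠ y in 𝓝 x, ∀ l ∈ range (k + D + 1),
      ‖(M y ^ l) y - (M x ^ l) x‖ < (ε' - ε) / (|C| + 1) :=
    (eventually_all_finset _).2 fun l _ => by
      simpa only [dist_eq_norm] using Metric.continuousAt_iff'.1 (hcont l).continuousAt _ hδ
  filter_upwards [hclose] with y hy S hS hx
  have hSy (l : ℕ) (hl : l < k + D + 1) :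
      ‖S ((M y ^ l) y) - S ((M x ^ l) x)‖ ≤ ε' - ε := by
    rw [← map_sub]
    calc _ ≤ (|C| + 1) * ((ε' - ε) / (|C| + 1)) :=
          S.le_of_opNorm_le_of_le (by linarith [le_abs_self C]) (hy l (mem_range.2 hl)).le
      _ = ε' - ε := by field_simp
  refine ⟨?_, fun l hl => ?_⟩
  · linarith [hSy k (by lia), hx.1,
      norm_sub_le_norm_sub_add_norm_sub (S ((M y ^ k) y)) (S ((M x ^ k) x)) v]
  · linarith [hSy l (by have := mem_Ioc.1 hl; lia), hx.2 l hl,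
      norm_le_norm_sub_add (S ((M y ^ l) y)) (S ((M x ^ l) x))]

lemma norm_pow_le_max_one_pow {A : Type*} [SeminormedRing A] {a : A} (ha : ‖a‖ ≤ C) {n L : ℕ}
    (hn : 0 < n) (hnL : n ≤ L) : ‖a ^ n‖ ≤ max 1 C ^ L :=
  calc ‖a ^ n‖ ≤ ‖a‖ ^ n := norm_pow_le' a hn
    _ ≤ max 1 C ^ n := by gcongr; exact ha.trans (le_max_right ..)
    _ ≤ max 1 C ^ L := pow_le_pow_right₀ (le_max_left ..) hnL

lemma mem_interior_of_selectsPower {T : Θ → E →L[𝕜] E} {s : Set Θ} (hC : ∀ θ ∈ s, ‖T θ‖ ≤ C)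
    (hε : ε < ε') {L : ℕ} (hx : ∀ θ ∈ s, ∃ n < L, SelectsPower M (T θ ^ (n + 1)) k D v ε x) :
    x ∈ interior {y | ∀ θ ∈ s, ∃ n, SelectsPower M (T θ ^ (n + 1)) k D v ε' y} := by
  rw [mem_interior_iff_mem_nhds]
  filter_upwards [eventually_selectsPower (M := M) (C := max 1 C ^ L) hε] with y hy θ hθ
  obtain ⟨n, hn, hsel⟩ := hx θ hθ
  exact ⟨n, hy _ (norm_pow_le_max_one_pow (hC θ hθ) n.succ_pos hn) hsel⟩

theorem exists_forall_selectsPower [CompleteSpace E] [TopologicalSpace.SeparableSpace E]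
    {ι : Type*} [Countable ι] {T : Θ → E →L[𝕜] E} {s : ι → Set Θ} {C : ι → ℝ}
    (hC : ∀ i, ∀ θ ∈ s i, ‖T θ‖ ≤ C i) {𝒟 : Set E} (h𝒟 : Dense 𝒟)
    (hsel : ∀ i k D, ∀ v ∈ 𝒟, ∀ x₀ ∈ 𝒟, ∀ ε > 0, ∃ x, ‖x - x₀‖ < ε ∧
      ∃ L, ∀ θ ∈ s i, ∃ n < L, SelectsPower M (T θ ^ (n + 1)) k D v ε x) :
    ∃ x, ∀ i, ∀ θ ∈ s i, ∀ k D v, ∀ ε > 0, ∃ n, SelectsPower M (T θ ^ (n + 1)) k D v ε x := by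
  obtain ⟨t, ht𝒟, ht, htd⟩ := h𝒟.exists_countable_dense_subset
  have := ht.to_subtype
  let U (j : ι × ℕ × ℕ × t × ℕ) : Set E := {y | ∀ θ ∈ s j.1, ∃ n,
    SelectsPower M (T θ ^ (n + 1)) j.2.1 j.2.2.1 j.2.2.2.1 (1 / (j.2.2.2.2 + 1)) y}
  have hU : ∀ j, Dense (interior (U j)) := by
    rintro ⟨i, k, D, v, e⟩
    refine Metric.dense_iff.2 fun x₁ r hr => ?_
    obtain ⟨x₀, hx₀, hx₀𝒟⟩ := Metric.dense_iff.1 h𝒟 x₁ (r / 2) (half_pos hr)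
    have he : (0 : ℝ) < 1 / (e + 1) := Nat.one_div_pos_of_nat
    obtain ⟨x, hx, L, hL⟩ := hsel i k D v (ht𝒟 v.2) x₀ hx₀𝒟 (min (r / 2) (1 / (e + 1) / 2))
      (by positivity)
    refine ⟨x, ?_, mem_interior_of_selectsPower (hC i)
      ((min_le_right ..).trans_lt (half_lt_self he)) hL⟩
    rw [mem_ball_iff_norm] at hx₀ ⊢
    linarith [norm_sub_le_norm_sub_add_norm_sub x x₀ x₁, hx.trans_le (min_le_left ..)]
  obtain ⟨x, hx⟩ := (dense_iInter_of_isOpen (fun j => isOpen_interior) hU).nonempty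
  refine ⟨x, fun i θ hθ k D v ε hε => ?_⟩
  obtain ⟨v', hv', hvt⟩ := Metric.dense_iff.1 htd v (ε / 2) (half_pos hε)
  obtain ⟨e, he⟩ := exists_nat_one_div_lt (half_pos hε)
  obtain ⟨n, hn⟩ := interior_subset (Set.mem_iInter.1 hx (i, k, D, ⟨v', hvt⟩, e)) θ hθ
  exact ⟨n, hn.congr_target (by linarith [mem_ball_iff_norm.1 hv'])⟩

lemma aeval_eq_trailingCoeff_smul_add_sum {R A : Type*} [CommSemiring R] [Semiring A] [Algebra R A]
    (a : A) (Q : R[X]) :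
    aeval a Q = Q.trailingCoeff • a ^ Q.natTrailingDegree +
      ∑ l ∈ Ioc Q.natTrailingDegree Q.natDegree, Q.coeff l • a ^ l := by
  rw [trailingCoeff, ← sum_insert (f := fun l => Q.coeff l • a ^ l) left_notMem_Ioc,
    Ioc_insert_left Q.natTrailingDegree_le_natDegree, aeval_eq_sum_range]
  refine (sum_subset (fun l hl => mem_range_succ_iff.2 (mem_Icc.1 hl).2) fun l hl hl' => ?_).symm
  rw [coeff_eq_zero_of_lt_natTrailingDegree, zero_smul]
  simpa [mem_range_succ_iff.1 hl] using hl'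

theorem dense_range_aeval_of_selectsPower {T : E →L[𝕜] E}
    (hx : ∀ k D v, ∀ ε > 0, ∃ n, SelectsPower M (T ^ (n + 1)) k D v ε x) {Q : 𝕜[X]} (hQ : Q ≠ 0) :
    Dense (Set.range fun n : ℕ => (T ^ (n + 1)) (aeval (M x) Q x)) := by
  refine Metric.dense_iff.2 fun w r hr => ?_
  have hc : Q.trailingCoeff ≠ 0 := trailingCoeff_nonzero_iff_nonzero.2 hQ
  set σ := ‖Q.trailingCoeff‖ + ∑ l ∈ Ioc Q.natTrailingDegree Q.natDegree, ‖Q.coeff l‖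
  have hσ : 0 < σ := by positivity
  obtain ⟨n, hn, hn'⟩ := hx Q.natTrailingDegree Q.natDegree (Q.trailingCoeff⁻¹ • w) (r / σ)
    (by positivity)
  refine ⟨_, ?_, n, rfl⟩
  have hsplit : (T ^ (n + 1)) (aeval (M x) Q x) - w =
      Q.trailingCoeff •
          ((T ^ (n + 1)) ((M x ^ Q.natTrailingDegree) x) - Q.trailingCoeff⁻¹ • w) +
        ∑ l ∈ Ioc Q.natTrailingDegree Q.natDegree, Q.coeff l • (T ^ (n + 1)) ((M x ^ l) x) := by
    rw [smul_sub, smul_inv_smul₀ hc, aeval_eq_trailingCoeff_smul_add_sum]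
    simp only [add_apply, smul_apply, _root_.sum_apply, map_add, map_smul,
      map_sum]
    abel
  rw [mem_ball_iff_norm, hsplit]
  calc _ < ‖Q.trailingCoeff‖ * (r / σ) +
        ∑ l ∈ Ioc Q.natTrailingDegree Q.natDegree, ‖Q.coeff l‖ * (r / σ) := by
        refine (norm_add_le _ _).trans_lt
          (add_lt_add_of_lt_of_le ?_ (norm_sum_le_of_le _ fun l hl => ?_))
        · rw [norm_smul]
          exact mul_lt_mul_of_pos_left hn (norm_pos_iff.2 hc)
        · rw [norm_smul]
          exact mul_le_mul_of_nonneg_left (hn' l hl).le (norm_nonneg _)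
    _ = r := by rw [← sum_mul, ← add_mul, mul_div_cancel₀ _ hσ.ne']

end PowerSelection

section LpSpace

variable {α β ι : Type*} {p : ℝ≥0∞}

theorem lp_norm_le_mul_norm_of_injective {E F : Type*} [NormedAddCommGroup E]
    [NormedAddCommGroup F] (hp : p ≠ 0) {f : α → β} (hf : f.Injective)
    {y : lp (fun _ : α => E) p} {z : lp (fun _ : β => F) p} {C : ℝ} (hC : 0 ≤ C)
    (h : ∀ k, ‖y k‖ ≤ C * ‖z (f k)‖) : ‖y‖ ≤ C * ‖z‖ := by
  have hCz : 0 ≤ C * ‖z‖ := mul_nonneg hC (lp.norm_nonneg' z)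
  rcases p.trichotomy with rfl | rfl | hp'
  · exact absurd rfl hp
  · exact lp.norm_le_of_forall_le hCz fun k =>
      (h k).trans (mul_le_mul_of_nonneg_left (lp.norm_apply_le_norm hp z _) hC)
  · refine lp.norm_le_of_forall_sum_le hp' hCz fun s => ?_
    calc ∑ k ∈ s, ‖y k‖ ^ p.toReal ≤ ∑ k ∈ s, (C * ‖z (f k)‖) ^ p.toReal := by
          gcongr with k
          exact h k
      _ = C ^ p.toReal * ∑ k ∈ s.map ⟨f, hf⟩, ‖z k‖ ^ p.toReal := by
          simp only [Real.mul_rpow hC (norm_nonneg _), mul_sum, sum_map,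
            Function.Embedding.coeFn_mk]
      _ ≤ C ^ p.toReal * ‖z‖ ^ p.toReal := by
          gcongr
          exact lp.sum_rpow_le_norm_rpow hp' z _
      _ = (C * ‖z‖) ^ p.toReal := (Real.mul_rpow hC (lp.norm_nonneg' z)).symm

variable {E : α → Type*} [∀ a, NormedAddCommGroup (E a)]

lemma lp_eq_sum_single [DecidableEq α] (y : lp E p) {s : Finset α} (hs : ∀ k ∉ s, y k = 0) :
    y = ∑ k ∈ s, lp.single p k (y k) := by
  ext k
  rw [lp.coeFn_sum, Finset.sum_apply]
  by_cases hk : k ∈ s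
  · rw [sum_eq_single_of_mem k hk fun j _ hj => lp.single_apply_ne p j _ hj.symm,
      lp.single_apply_self]
  · rw [hs k hk, sum_eq_zero fun j hj =>
      lp.single_apply_ne p j _ (ne_of_mem_of_not_mem hj hk).symm]

variable [Fact (1 ≤ p)]

lemma lp_norm_le_sum (y : lp E p) {s : Finset α} (hs : ∀ k ∉ s, y k = 0) :
    ‖y‖ ≤ ∑ k ∈ s, ‖y k‖ := by
  classical
  calc ‖y‖ = ‖∑ k ∈ s, lp.single p k (y k)‖ := congrArg norm (lp_eq_sum_single y hs)
    _ ≤ ∑ k ∈ s, ‖lp.single p k (y k)‖ := norm_sum_le _ _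
    _ = ∑ k ∈ s, ‖y k‖ := by simp only [lp.norm_single (zero_lt_one.trans_le Fact.out)]

lemma lp_norm_le_card_mul_add_card_mul [DecidableEq α] (y : lp E p) {s t : Finset α} {A B : ℝ}
    (hst : ∀ k ∉ s ∪ t, y k = 0) (hs : ∀ k ∈ s, ‖y k‖ ≤ A) (ht : ∀ k ∈ t, ‖y k‖ ≤ B) :
    ‖y‖ ≤ #s * A + #t * B :=
  calc ‖y‖ ≤ ∑ k ∈ s ∪ t, ‖y k‖ := lp_norm_le_sum y hst
    _ ≤ ∑ k ∈ s, ‖y k‖ + ∑ k ∈ t, ‖y k‖ := by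
        rw [← sum_union_inter]
        exact le_add_of_nonneg_right (sum_nonneg fun _ _ => norm_nonneg _)
    _ ≤ #s * A + #t * B := by
        simp only [← nsmul_eq_mul]
        exact add_le_add (sum_le_card_nsmul s _ A hs) (sum_le_card_nsmul t _ B ht)

theorem dense_setOf_eventually_eq_zero (hp : p ≠ ⊤) :
    Dense {y : lp E p | ∀ᶠ k in cofinite, y k = 0} := by
  classical
  refine fun y => mem_closure_of_tendsto (lp.hasSum_single hp y) (.of_forall fun s => ?_)
  filter_upwards [s.eventually_cofinite_notMem] with k hk
  rw [lp.coeFn_sum, Finset.sum_apply]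
  exact sum_eq_zero fun j hj => lp.single_apply_ne p j _ (ne_of_mem_of_not_mem hj hk).symm

theorem separableSpace_lp [Countable α] [∀ a, TopologicalSpace.SeparableSpace (E a)]
    (hp : p ≠ ⊤) : TopologicalSpace.SeparableSpace (lp E p) := by
  classical
  let F (s : Finset α) (f : ∀ a, E a) : lp E p := ∑ k ∈ s, lp.single p k (f k)
  have hF (s : Finset α) : Continuous (F s) :=
    continuous_finsetSum _ fun k _ => (lp.isometry_single k).continuous.comp (continuous_apply k)
  have hsep : TopologicalSpace.IsSeparable (⋃ s, Set.range (F s)) :=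
    .iUnion fun s => TopologicalSpace.isSeparable_range (hF s)
  have hsub : {y : lp E p | ∀ᶠ k in cofinite, y k = 0} ⊆ ⋃ s, Set.range (F s) := fun y hy =>
    Set.mem_iUnion.2 ⟨(eventually_cofinite.1 hy).toFinset, ⇑y,
      (lp_eq_sum_single y fun k hk => by simpa using hk).symm⟩
  rw [← TopologicalSpace.isSeparable_univ_iff,
    ← ((dense_setOf_eventually_eq_zero hp).mono hsub).closure_eq]
  exact hsep.closure

variable {𝕜 : Type*} [NontriviallyNormedField 𝕜]

lemma memℓp_mul (x y : lp (fun _ : α => 𝕜) p) : Memℓp (fun n => x n * y n) p := by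
  refine ((lp.memℓp y).norm.const_mul ‖x‖).mono fun n => ?_
  rw [norm_mul]
  gcongr
  exact lp.norm_apply_le_norm (zero_lt_one.trans_le Fact.out).ne' x n

variable [Fintype ι]

variable (p 𝕜) in
/-- Coordinatewise multiplication on the power `ι → ℓᵖ`, as a bounded bilinear map. -/
def coordMul : (ι → lp (fun _ : α => 𝕜) p) →L[𝕜] (ι → lp (fun _ : α => 𝕜) p) →L[𝕜]
    ι → lp (fun _ : α => 𝕜) p :=
  LinearMap.mkContinuous₂
    (LinearMap.mk₂ 𝕜 (fun x y i => ⟨fun n => x i n * y i n, memℓp_mul (x i) (y i)⟩)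
      (fun _ _ _ => by ext; exact add_mul ..) (fun _ _ _ => by ext; exact mul_assoc ..)
      (fun _ _ _ => by ext; exact mul_add ..) (fun _ _ _ => by ext; exact mul_left_comm ..)) 1
    fun x y => by
      rw [one_mul]
      refine (pi_norm_le_iff_of_nonneg (by positivity)).2 fun i => ?_
      calc _ ≤ ‖x i‖ * ‖y i‖ :=
            have hp : p ≠ 0 := (zero_lt_one.trans_le Fact.out).ne'
            lp_norm_le_mul_norm_of_injective hp Function.injective_id (norm_nonneg _) fun n => by
              simpa using mul_le_mul_of_nonneg_right (lp.norm_apply_le_norm hp (x i) n)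
                (norm_nonneg (y i n))
        _ ≤ ‖x‖ * ‖y‖ := by gcongr <;> exact norm_le_pi_norm _ i

@[simp]
lemma coordMul_apply (x y : ι → lp (fun _ : α => 𝕜) p) (i : ι) (n : α) :
    coordMul p 𝕜 x y i n = x i n * y i n := rfl

lemma coordMul_pow_apply (x y : ι → lp (fun _ : α => 𝕜) p) (k : ℕ) (i : ι) (n : α) :
    (coordMul p 𝕜 x ^ k) y i n = x i n ^ k * y i n := by
  induction k with
  | zero => rw [pow_zero, pow_zero, one_mul, one_apply_eq_self]
  | succ k ih =>
    rw [pow_succ', mul_apply_eq_comp, coordMul_apply, ih, pow_succ', mul_assoc]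

lemma aeval_coordMul_apply (x y : ι → lp (fun _ : α => 𝕜) p) (Q : Polynomial 𝕜) (i : ι) (n : α) :
    Polynomial.aeval (coordMul p 𝕜 x) Q y i n = Q.eval (x i n) * y i n := by
  induction Q using Polynomial.induction_on' with
  | add Q Q' hQ hQ' => simp [hQ, hQ', add_mul]
  | monomial k c =>
    rw [Polynomial.aeval_monomial, Polynomial.eval_monomial, mul_assoc, ← coordMul_pow_apply,
      ← Algebra.smul_def]
    rfl

end LpSpace

section Weights

/-- The product `w_{k+1} ⋯ w_{k+n}` of `n` consecutive weights, by which the `n`-th iterate of the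
backward shift multiplies the coordinate it moves from place `k + n` to place `k`. -/
def weightProd (w : ℕ → ℝ) (k n : ℕ) : ℝ := ∏ l ∈ range n, w (k + l + 1)

lemma weightProd_add (w : ℕ → ℝ) (k n n' : ℕ) :
    weightProd w k (n + n') = weightProd w k n * weightProd w (k + n) n' := by
  simp only [weightProd, prod_range_add, add_assoc]

lemma weightProd_pos {w : ℕ → ℝ} (hw : ∀ n, 0 < w n) (k n : ℕ) : 0 < weightProd w k n :=
  prod_pos fun _ _ => hw _

section IsProductShift

variable {p : ℝ≥0∞} [Fact (1 ≤ p)] {d : ℕ} {w : ℝ → ℕ → ℝ}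
  {T : (Fin d → lpC p) →L[ℂ] (Fin d → lpC p)} {lam : Fin d → ℝ}

lemma IsProductShift.pow_apply (hT : IsProductShift p d w T lam) (n : ℕ) (x : Fin d → lpC p)
    (t : Fin d) (h : ℕ) : (T ^ n) x t h = weightProd (w (lam t)) h n * x t (h + n) := by
  induction n generalizing h with
  | zero => simp [weightProd]
  | succ n ih =>
    rw [pow_succ', mul_apply_eq_comp, hT, ih, add_comm n 1, weightProd_add]
    simp [weightProd, mul_assoc, add_assoc]

lemma IsProductShift.opNorm_le (hT : IsProductShift p d w T lam) {C : ℝ} (hC : 0 ≤ C)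
    (hw : ∀ t n, |w (lam t) (n + 1)| ≤ C) : ‖T‖ ≤ C := by
  refine T.opNorm_le_bound hC fun x => (pi_norm_le_iff_of_nonneg (by positivity)).2 fun t => ?_
  calc ‖T x t‖ ≤ C * ‖x t‖ := by
        refine lp_norm_le_mul_norm_of_injective (zero_lt_one.trans_le Fact.out).ne'
          (add_left_injective 1) hC fun n => ?_
        rw [hT, norm_mul, Complex.norm_real]
        exact mul_le_mul_of_nonneg_right (hw t n) (norm_nonneg _)
    _ ≤ C * ‖x‖ := by gcongr; exact norm_le_pi_norm x t

end IsProductShift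

/-- The weight sequence `w_n = 1 + a / n`; it takes the harmless value `1` at `n = 0`. -/
def harmonicWeight (a : ℝ) (n : ℕ) : ℝ := 1 + a / n

lemma harmonicWeight_pos {a : ℝ} (ha : 0 ≤ a) (n : ℕ) : 0 < harmonicWeight a n :=
  add_pos_of_pos_of_nonneg one_pos (by positivity)

lemma harmonicWeight_succ_le {a : ℝ} (ha : 0 ≤ a) (n : ℕ) : harmonicWeight a (n + 1) ≤ 1 + a :=
  add_le_add_right (div_le_self ha (by simp)) 1

lemma rpow_le_weightProd {a σ : ℝ} (hσ : 0 ≤ σ) (hσ1 : σ ≤ 1) (hσa : σ ≤ a) (k n : ℕ) :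
    (((n + k + 1 : ℕ) : ℝ) / (k + 1 : ℕ)) ^ σ ≤ weightProd (harmonicWeight a) k n := by
  induction n with
  | zero => simp [weightProd, div_self (Nat.cast_add_one_ne_zero (R := ℝ) k)]
  | succ n ih =>
    have hstep : (1 + 1 / ((n + k + 1 : ℕ) : ℝ)) ^ σ ≤ harmonicWeight a (k + n + 1) :=
      calc (1 + 1 / ((n + k + 1 : ℕ) : ℝ)) ^ σ ≤ 1 + σ * (1 / ((n + k + 1 : ℕ) : ℝ)) :=
            rpow_one_add_le_one_add_mul_self
              (by linarith [show (0 : ℝ) ≤ 1 / ((n + k + 1 : ℕ) : ℝ) by positivity]) hσ hσ1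
        _ ≤ harmonicWeight a (k + n + 1) := by
            rw [mul_one_div, add_comm n k, harmonicWeight]
            gcongr
    calc (((n + 1 + k + 1 : ℕ) : ℝ) / (k + 1 : ℕ)) ^ σ
        = (((n + k + 1 : ℕ) : ℝ) / (k + 1 : ℕ)) ^ σ * (1 + 1 / ((n + k + 1 : ℕ) : ℝ)) ^ σ := by
          rw [← Real.mul_rpow (by positivity) (by positivity)]
          congr 1
          push_cast
          field_simp
          ring
      _ ≤ weightProd (harmonicWeight a) k n * harmonicWeight a (k + n + 1) := by
          gcongr
          exact (weightProd_pos (harmonicWeight_pos (hσ.trans hσa)) k n).le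
      _ = weightProd (harmonicWeight a) k (n + 1) := (prod_range_succ ..).symm

lemma rpow_div_le_weightProd {a σ : ℝ} (hσ : 0 ≤ σ) (hσ1 : σ ≤ 1) (hσa : σ ≤ a) {k N R n : ℕ}
    (hk : k < N) (hn : R ≤ n) : (R : ℝ) ^ σ / N ≤ weightProd (harmonicWeight a) k n := by
  have hN : (1 : ℝ) ≤ N := by exact_mod_cast Nat.one_le_of_lt hk
  calc (R : ℝ) ^ σ / N ≤ (R : ℝ) ^ σ / (N : ℝ) ^ σ := by
        gcongr
        exact Real.rpow_le_self_of_one_le hN hσ1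
    _ = ((R : ℝ) / N) ^ σ := (Real.div_rpow (by positivity) (by positivity) σ).symm
    _ ≤ (((n + k + 1 : ℕ) : ℝ) / (k + 1 : ℕ)) ^ σ := by
        gcongr <;> lia
    _ ≤ weightProd (harmonicWeight a) k n := rpow_le_weightProd hσ hσ1 hσa k n

lemma harmonicWeight_le_mul_exp {a b : ℝ} (hb : 0 ≤ b) {l n : ℕ} (hln : l < n) :
    harmonicWeight a n ≤ harmonicWeight b n * Real.exp (|a - b| * ((l : ℝ) + 1)⁻¹) := by
  have hln' : ((l : ℝ) + 1) ≤ n := by exact_mod_cast hln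
  calc harmonicWeight a n ≤ harmonicWeight b n + |a - b| * (n : ℝ)⁻¹ := by
        rw [harmonicWeight, harmonicWeight, add_assoc, div_eq_mul_inv, div_eq_mul_inv, ← add_mul]
        gcongr
        linarith [le_abs_self (a - b)]
    _ ≤ harmonicWeight b n + harmonicWeight b n * (|a - b| * ((l : ℝ) + 1)⁻¹) := by
        have hb1 : 1 ≤ harmonicWeight b n := le_add_of_nonneg_right (by positivity)
        have hinv : |a - b| * (n : ℝ)⁻¹ ≤ |a - b| * ((l : ℝ) + 1)⁻¹ := by gcongr
        exact add_le_add_right (hinv.trans (le_mul_of_one_le_left (by positivity) hb1)) _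
    _ = harmonicWeight b n * (|a - b| * ((l : ℝ) + 1)⁻¹ + 1) := by ring
    _ ≤ _ := mul_le_mul_of_nonneg_left (Real.add_one_le_exp _) (harmonicWeight_pos hb n).le

lemma weightProd_le_mul_exp {a b : ℝ} (ha : 0 ≤ a) (hb : 0 ≤ b) (k n : ℕ) :
    weightProd (harmonicWeight a) k n ≤
      weightProd (harmonicWeight b) k n * Real.exp (|a - b| * harmonic n) := by
  have hexp : Real.exp (|a - b| * harmonic n) =
      ∏ l ∈ range n, Real.exp (|a - b| * ((l : ℝ) + 1)⁻¹) := by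
    rw [← Real.exp_sum, ← mul_sum, harmonic]
    push_cast
    rfl
  rw [hexp, weightProd, weightProd, ← prod_mul_distrib]
  exact prod_le_prod (fun l _ => (harmonicWeight_pos ha _).le) fun l _ =>
    harmonicWeight_le_mul_exp hb (by lia)

end Weights

section BlockSequence

/-- The sequence whose `j`-th block `[j R, (j + 1) R)`, `1 ≤ j ≤ q`, holds in place `k` an `m`-th
root of `v k` divided by the product of weights `u j` met on the way from there to place `k`; all
other blocks vanish. The `j R`-th iterate of the shift with weights `u j` thus moves block `j` of
its `m`-th power exactly onto `v`. -/
def blockSeq (m R q : ℕ) (u : ℕ → ℕ → ℝ) (v : ℕ → ℂ) (h : ℕ) : ℂ :=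
  if h / R ∈ Icc 1 q then
    (v (h % R) / weightProd (u (h / R)) (h % R) (h / R * R)) ^ (m : ℂ)⁻¹
  else 0

/-- The places `k + j R` with `1 ≤ j ≤ q` and `k < N`, where `blockSeq` may be nonzero if `v` is
supported in `[0, N)`. -/
def blockSupport (R q N : ℕ) : Finset ℕ :=
  (Icc 1 q ×ˢ range N).image fun a => a.2 + a.1 * R

variable {m R q N : ℕ} {u : ℕ → ℕ → ℝ} {v : ℕ → ℂ}

lemma mem_blockSupport {h : ℕ} :
    h ∈ blockSupport R q N ↔ ∃ j ∈ Icc 1 q, ∃ k < N, k + j * R = h := by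
  simp [blockSupport, and_assoc]

lemma card_blockSupport_le : #(blockSupport R q N) ≤ q * N :=
  card_image_le.trans (by simp)

lemma le_of_mem_blockSupport (hNR : N ≤ R) {h : ℕ} (hh : h ∈ blockSupport R q N) : N ≤ h := by
  obtain ⟨j, hj, k, -, rfl⟩ := mem_blockSupport.1 hh
  exact hNR.trans ((Nat.le_mul_of_pos_left R (mem_Icc.1 hj).1).trans (Nat.le_add_left _ _))

lemma mem_blockSupport_of_add_mem {h j : ℕ} (hN : N ≤ h)
    (hh : h + j * R ∈ blockSupport R q N) : h ∈ blockSupport R q N := by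
  obtain ⟨i, hi, k, hk, hki⟩ := mem_blockSupport.1 hh
  obtain ⟨a, rfl⟩ | hij : (∃ a, i = a + 1 + j) ∨ i ≤ j := by
    by_cases hij : i ≤ j
    · exact .inr hij
    · exact .inl ⟨i - j - 1, by lia⟩
  · exact mem_blockSupport.2 ⟨a + 1, mem_Icc.2 ⟨by lia, by have := mem_Icc.1 hi; lia⟩, k, hk, by
      linarith [add_mul (a + 1) j R]⟩
  · have := Nat.mul_le_mul_right R hij
    lia

lemma blockSeq_add_mul {k j : ℕ} (hk : k < R) : blockSeq m R q u v (k + j * R) =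
    if j ∈ Icc 1 q then (v k / weightProd (u j) k (j * R)) ^ (m : ℂ)⁻¹ else 0 := by
  rw [blockSeq, Nat.add_mul_div_right _ _ (by lia), Nat.div_eq_of_lt hk, zero_add,
    Nat.add_mul_mod_self_right, Nat.mod_eq_of_lt hk]

lemma blockSeq_pow (hm : m ≠ 0) {k j : ℕ} (hk : k < R) (hj : j ∈ Icc 1 q) :
    blockSeq m R q u v (k + j * R) ^ m = v k / weightProd (u j) k (j * R) := by
  rw [blockSeq_add_mul hk, if_pos hj, Complex.cpow_nat_inv_pow _ hm]

lemma blockSeq_eq_zero (hm : m ≠ 0) (hv : ∀ k, N ≤ k → v k = 0) {h : ℕ}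
    (hh : h ∉ blockSupport R q N) : blockSeq m R q u v h = 0 := by
  rw [blockSeq, ite_eq_right_iff]
  intro hj
  rw [hv, zero_div, Complex.zero_cpow (by simpa using hm)]
  by_contra! hk
  exact hh (mem_blockSupport.2 ⟨_, hj, _, hk, Nat.mod_add_div' h R⟩)

lemma norm_blockSeq_le (hm : m ≠ 0) (hNR : N ≤ R) (hv : ∀ k, N ≤ k → v k = 0) {V B ξ : ℝ}
    (hV : ∀ k, ‖v k‖ ≤ V) (hB : 0 < B) (hξ : 0 ≤ ξ) (hVB : V / B ≤ ξ ^ m)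
    (hu : ∀ j ∈ Icc 1 q, ∀ k < N, B ≤ weightProd (u j) k (j * R)) (h : ℕ) :
    ‖blockSeq m R q u v h‖ ≤ ξ := by
  by_cases hh : h ∈ blockSupport R q N
  · obtain ⟨j, hj, k, hk, rfl⟩ := mem_blockSupport.1 hh
    refine le_of_pow_le_pow_left₀ hm hξ ?_
    have hW := hu j hj k hk
    rw [← norm_pow, blockSeq_pow hm (hk.trans_le hNR) hj, norm_div, Complex.norm_real,
      Real.norm_of_nonneg (hB.le.trans hW)]
    exact (div_le_div₀ ((norm_nonneg _).trans (hV k)) (hV k) hB hW).trans hVB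
  · rwa [blockSeq_eq_zero hm hv hh, norm_zero]

lemma norm_le_of_forall_eq_blockSeq {p : ℝ≥0∞} [Fact (1 ≤ p)] (hm : m ≠ 0)
    (hv : ∀ k, N ≤ k → v k = 0) {ξ : ℝ} (hξ : ∀ h, ‖blockSeq m R q u v h‖ ≤ ξ) (y : lpC p)
    (hy : ∀ h, y h = blockSeq m R q u v h) : ‖y‖ ≤ q * N * ξ :=
  calc ‖y‖ ≤ ∑ h ∈ blockSupport R q N, ‖y h‖ :=
        lp_norm_le_sum y fun h hh => (hy h).trans (blockSeq_eq_zero hm hv hh)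
    _ ≤ #(blockSupport R q N) * ξ := by
        rw [← nsmul_eq_mul]
        exact sum_le_card_nsmul _ _ _ fun h _ => hy h ▸ hξ h
    _ ≤ q * N * ξ := by
        have hξ0 : 0 ≤ ξ := (norm_nonneg _).trans (hξ 0)
        gcongr
        exact_mod_cast card_blockSupport_le

/-- The weights `w` are comparable, along blocks of length `R`, with the weights `u i` attached to
the blocks `1 ≤ i ≤ q`, and very close to those of block `j`: products of `w` are at least `B`,
exceed those of `u i` at most by a factor `B η`, and equal those of `u j` up to a factor within `τ`
of `1`. -/
structure BlockComparison (u : ℕ → ℕ → ℝ) (w : ℕ → ℝ) (R q N j : ℕ) (B η τ : ℝ) : Prop where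
  u_pos : ∀ i n, 0 < u i n
  w_pos : ∀ n, 0 < w n
  mem_Icc : j ∈ Icc 1 q
  B_pos : 0 < B
  η_nonneg : 0 ≤ η
  le_weightProd : ∀ a ≥ 1, ∀ k < N, B ≤ weightProd w k (a * R)
  weightProd_le : ∀ i ∈ Icc 1 q, ∀ k,
    weightProd w k (i * R) ≤ B * η * weightProd (u i) k (i * R)
  abs_div_sub_one_le : ∀ k, |weightProd w k (j * R) / weightProd (u j) k (j * R) - 1| ≤ τ

namespace BlockComparison

variable {w : ℕ → ℝ} {j : ℕ} {B η τ V : ℝ}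

lemma shift_sub (H : BlockComparison u w R q N j B η τ) (hm : m ≠ 0) {h : ℕ} (hh : h < R) :
    weightProd w h (j * R) * blockSeq m R q u v (h + j * R) ^ m - v h =
      v h * ((weightProd w h (j * R) / weightProd (u j) h (j * R) - 1 : ℝ) : ℂ) := by
  rw [blockSeq_pow hm hh H.mem_Icc]
  push_cast
  ring

lemma norm_shift_sub_le (H : BlockComparison u w R q N j B η τ) (hm : m ≠ 0)
    (hV : ∀ k, ‖v k‖ ≤ V) {h : ℕ} (hh : h < R) :
    ‖weightProd w h (j * R) * blockSeq m R q u v (h + j * R) ^ m - v h‖ ≤ V * τ := by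
  rw [H.shift_sub hm hh, norm_mul, Complex.norm_real]
  exact mul_le_mul (hV h) (H.abs_div_sub_one_le h) (norm_nonneg _)
    ((norm_nonneg _).trans (hV h))

lemma norm_shift_le_of_mem_blockSupport (H : BlockComparison u w R q N j B η τ) (hm : m ≠ 0)
    (hNR : N ≤ R) (hV : ∀ k, ‖v k‖ ≤ V) {h : ℕ} (hh : h ∈ blockSupport R q N) :
    ‖weightProd w h (j * R) * blockSeq m R q u v (h + j * R) ^ m‖ ≤ V * η := by
  obtain ⟨a, ha, k, hk, rfl⟩ := mem_blockSupport.1 hh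
  have hV0 : 0 ≤ V := (norm_nonneg _).trans (hV 0)
  rw [add_assoc, ← add_mul]
  by_cases hi : a + j ∈ Icc 1 q
  · have hWa := H.le_weightProd a (Finset.mem_Icc.1 ha).1 k hk
    have hWu := weightProd_pos (H.u_pos (a + j)) k ((a + j) * R)
    have hw := weightProd_pos H.w_pos (k + a * R) (j * R)
    have hcocycle : B * weightProd w (k + a * R) (j * R) ≤
        B * (η * weightProd (u (a + j)) k ((a + j) * R)) :=
      calc B * weightProd w (k + a * R) (j * R)
          ≤ weightProd w k (a * R) * weightProd w (k + a * R) (j * R) := by gcongr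
        _ = weightProd w k ((a + j) * R) := by rw [add_mul, weightProd_add]
        _ ≤ B * η * weightProd (u (a + j)) k ((a + j) * R) := H.weightProd_le _ hi k
        _ = _ := mul_assoc ..
    rw [blockSeq_pow hm (hk.trans_le hNR) hi, norm_mul, norm_div, Complex.norm_real,
      Complex.norm_real, Real.norm_of_nonneg hw.le, Real.norm_of_nonneg hWu.le]
    calc weightProd w (k + a * R) (j * R) * (‖v k‖ / weightProd (u (a + j)) k ((a + j) * R))
        = ‖v k‖ * (weightProd w (k + a * R) (j * R) /
            weightProd (u (a + j)) k ((a + j) * R)) := by ring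
      _ ≤ V * η := by
          refine mul_le_mul (hV k) ?_ (by positivity) hV0
          exact (div_le_iff₀ hWu).2 (le_of_mul_le_mul_left hcocycle H.B_pos)
  · rw [blockSeq_add_mul (hk.trans_le hNR), if_neg hi, zero_pow hm, mul_zero, norm_zero]
    exact mul_nonneg hV0 H.η_nonneg

lemma norm_le_of_forall {p : ℝ≥0∞} [Fact (1 ≤ p)] (H : BlockComparison u w R q N j B η τ)
    (hV : 0 ≤ V) (y : lpC p) {A : ℝ} (hy : ∀ h ∉ range N ∪ blockSupport R q N, y h = 0)
    (hA : ∀ h < N, ‖y h‖ ≤ A) (hη : ∀ h ∈ blockSupport R q N, ‖y h‖ ≤ V * η) :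
    ‖y‖ ≤ N * A + q * N * (V * η) := by
  have hVη : 0 ≤ V * η := mul_nonneg hV H.η_nonneg
  calc ‖y‖ ≤ #(range N) * A + #(blockSupport R q N) * (V * η) :=
        lp_norm_le_card_mul_add_card_mul y hy (fun h hh => hA h (mem_range.1 hh)) hη
    _ ≤ N * A + q * N * (V * η) := by
        rw [card_range]
        gcongr
        exact_mod_cast card_blockSupport_le

lemma blockSeq_add_mul_eq_zero (hm : m ≠ 0) (hv : ∀ k, N ≤ k → v k = 0) {h : ℕ}
    (hh : h ∉ range N ∪ blockSupport R q N) : blockSeq m R q u v (h + j * R) = 0 := by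
  rw [mem_union, not_or, mem_range, not_lt] at hh
  exact blockSeq_eq_zero hm hv fun h' => hh.2 (mem_blockSupport_of_add_mem hh.1 h')

variable {p : ℝ≥0∞} [Fact (1 ≤ p)] {v : lpC p} (z : lpC p)

lemma norm_sub_le (H : BlockComparison u w R q N j B η τ) (hm : m ≠ 0) (hNR : N ≤ R)
    (hv : ∀ k, N ≤ k → v k = 0) (hV : ∀ k, ‖v k‖ ≤ V)
    (hz : ∀ h, z h = weightProd w h (j * R) * blockSeq m R q u v (h + j * R) ^ m) :
    ‖z - v‖ ≤ N * (V * τ) + q * N * (V * η) := by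
  refine H.norm_le_of_forall ((norm_nonneg _).trans (hV 0)) _ (fun h hh => ?_) (fun h hh => ?_)
    fun h hh => ?_
  · have hhN : N ≤ h := by simp_all only [mem_union, mem_range, not_or, not_lt]
    rw [lp.coeFn_sub, Pi.sub_apply, hz, blockSeq_add_mul_eq_zero hm hv hh, zero_pow hm,
      mul_zero, hv h hhN, sub_zero]
  · rw [lp.coeFn_sub, Pi.sub_apply, hz]
    exact H.norm_shift_sub_le hm hV (hh.trans_le hNR)
  · rw [lp.coeFn_sub, Pi.sub_apply, hz, hv h (le_of_mem_blockSupport hNR hh), sub_zero]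
    exact H.norm_shift_le_of_mem_blockSupport hm hNR hV hh

lemma norm_le_of_lt (H : BlockComparison u w R q N j B η τ) (hm : m ≠ 0) (hNR : N ≤ R)
    (hv : ∀ k, N ≤ k → v k = 0) (hV : ∀ k, ‖v k‖ ≤ V) {ξ : ℝ} (hξ1 : ξ ≤ 1)
    (hξ : ∀ h, ‖blockSeq m R q u v h‖ ≤ ξ) {l : ℕ} (hl : m < l)
    (hz : ∀ h, z h = weightProd w h (j * R) * blockSeq m R q u v (h + j * R) ^ l) :
    ‖z‖ ≤ N * (V * (1 + τ) * ξ) + q * N * (V * η) := by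
  have hV0 : 0 ≤ V := (norm_nonneg _).trans (hV 0)
  have hξ0 : 0 ≤ ξ := (norm_nonneg _).trans (hξ 0)
  have hzm (h : ℕ) : ‖z h‖ ≤
      ‖weightProd w h (j * R) * blockSeq m R q u v (h + j * R) ^ m‖ * ξ := by
    rw [hz, ← Nat.add_sub_cancel' hl.le, pow_add, ← mul_assoc, norm_mul _ (_ ^ (l - m)), norm_pow]
    gcongr
    exact (pow_le_of_le_one (norm_nonneg _) ((hξ _).trans hξ1) (by lia)).trans (hξ _)
  refine H.norm_le_of_forall hV0 z (fun h hh => ?_) (fun h hh => ?_) fun h hh => ?_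
  · rw [hz, blockSeq_add_mul_eq_zero hm hv hh, zero_pow (by lia), mul_zero]
  · refine (hzm h).trans (mul_le_mul_of_nonneg_right ?_ hξ0)
    calc _ ≤ ‖weightProd w h (j * R) * blockSeq m R q u v (h + j * R) ^ m - v h‖ + ‖v h‖ :=
          norm_le_norm_sub_add _ _
      _ ≤ V * τ + V := add_le_add (H.norm_shift_sub_le hm hV (hh.trans_le hNR)) (hV h)
      _ = V * (1 + τ) := by ring
  · exact (hzm h).trans (mul_le_of_le_one_right (norm_nonneg _) hξ1 |>.trans
      (H.norm_shift_le_of_mem_blockSupport hm hNR hV hh))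

end BlockComparison

end BlockSequence

section Parameters

lemma harmonic_pow_le (c M : ℕ) : (harmonic (M ^ c) : ℝ) ≤ 1 + c * Real.log M := by
  simpa only [Nat.cast_pow, Real.log_pow] using harmonic_le_one_add_log (M ^ c)

lemma tendsto_harmonic_pow_div_atTop (c : ℕ) :
    Tendsto (fun M : ℕ => (harmonic (M ^ c) : ℝ) / M) atTop (𝓝 0) := by
  have hlog : Tendsto (fun M : ℕ => (Real.log M : ℝ) / M) atTop (𝓝 0) :=
    Real.isLittleO_log_id_atTop.tendsto_div_nhds_zero.comp tendsto_natCast_atTop_atTop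
  have hbound : Tendsto (fun M : ℕ => 1 / (M : ℝ) + c * (Real.log M / M)) atTop (𝓝 0) := by
    simpa using tendsto_one_div_atTop_nhds_zero_nat.add (hlog.const_mul (c : ℝ))
  refine squeeze_zero (fun M => ?_) (fun M => ?_) hbound
  · exact div_nonneg (by rw [harmonic]; positivity) M.cast_nonneg
  · calc (harmonic (M ^ c) : ℝ) / M ≤ (1 + c * Real.log M) / M := by
          gcongr
          exact harmonic_pow_le c M
      _ = 1 / (M : ℝ) + c * (Real.log M / M) := by ring

lemma eventually_mul_rpow_le_rpow (K : ℝ) {a b : ℝ} (hab : a < b) :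
    ∀ᶠ M : ℕ in atTop, K * (M : ℝ) ^ a ≤ (M : ℝ) ^ b := by
  have htop := (tendsto_rpow_atTop (sub_pos.2 hab)).comp tendsto_natCast_atTop_atTop
  filter_upwards [htop.eventually_ge_atTop K, eventually_gt_atTop 0] with M hK hM
  have hM : (0 : ℝ) < M := by exact_mod_cast hM
  calc K * (M : ℝ) ^ a ≤ (M : ℝ) ^ (b - a) * (M : ℝ) ^ a := by gcongr; exact hK
    _ = (M : ℝ) ^ b := by rw [← Real.rpow_add hM, sub_add_cancel]

lemma eventually_mul_exp_harmonic_pow_le_rpow (K : ℝ) {κ a b : ℝ} {c : ℕ} (hκ : 0 ≤ κ)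
    (hab : κ * c + a < b) : ∀ᶠ M : ℕ in atTop,
      K * Real.exp (κ * harmonic (M ^ c)) * (M : ℝ) ^ a ≤ (M : ℝ) ^ b := by
  filter_upwards [eventually_mul_rpow_le_rpow (|K| * Real.exp κ) hab, eventually_gt_atTop 0]
    with M hK hM
  have hM : (0 : ℝ) < M := by exact_mod_cast hM
  calc K * Real.exp (κ * harmonic (M ^ c)) * (M : ℝ) ^ a
      ≤ |K| * Real.exp (κ * (1 + c * Real.log M)) * (M : ℝ) ^ a := by
        gcongr
        · exact le_abs_self K
        · exact harmonic_pow_le c M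
    _ = |K| * Real.exp κ * (M : ℝ) ^ (κ * c + a) := by
        rw [Real.rpow_add hM, Real.rpow_def_of_pos hM (κ * c), mul_one_add, Real.exp_add]
        ring_nf
    _ ≤ (M : ℝ) ^ b := hK

lemma eventually_errors_lt {q η τ : ℕ → ℝ} (hη : Tendsto η atTop (𝓝 0))
    (hτ : Tendsto τ atTop (𝓝 0)) (hqη : Tendsto (fun M => q M * η M) atTop (𝓝 0)) (N V : ℝ)
    {ε : ℝ} (hε : 0 < ε) : ∀ᶠ M in atTop, q M * N * η M < ε ∧
      N * (V * τ M) + q M * N * (V * η M) < ε ∧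
      N * (V * (1 + τ M) * η M) + q M * N * (V * η M) < ε := by
  have hspread : Tendsto (fun M => q M * N * (V * η M)) atTop (𝓝 0) := by
    simpa only [mul_zero, mul_assoc, mul_left_comm] using (hqη.const_mul N).const_mul V
  have hheight : Tendsto (fun M => q M * N * η M) atTop (𝓝 0) := by
    simpa only [mul_zero, mul_assoc, mul_left_comm] using hqη.const_mul N
  have herror : Tendsto (fun M => N * (V * τ M) + q M * N * (V * η M)) atTop (𝓝 0) := by
    simpa only [mul_zero, add_zero] using ((hτ.const_mul V).const_mul N).add hspread
  have herror' : Tendsto (fun M => N * (V * (1 + τ M) * η M) + q M * N * (V * η M)) atTop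
      (𝓝 0) := by
    simpa only [mul_zero, add_zero] using
      ((((hτ.const_add 1).const_mul V).mul hη).const_mul N).add hspread
  exact (hheight.eventually_lt_const hε).and <| (herror.eventually_lt_const hε).and <|
    herror'.eventually_lt_const hε

lemma exists_lt_natCast_mul (a b c : ℝ) {σ : ℝ} (hσ : 0 < σ) :
    ∃ e : ℕ, e ≠ 0 ∧ a < e * σ ∧ σ / 2 * (b + e) + c < e * σ := by
  have hlarge (r : ℝ) : ∀ᶠ e : ℕ in atTop, r < e * (σ / 2) :=
    (tendsto_natCast_atTop_atTop.atTop_mul_const (half_pos hσ)).eventually_gt_atTop r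
  obtain ⟨e, he₀, he₁, he₂⟩ := ((eventually_ne_atTop 0).and <|
    (hlarge (a / 2)).and (hlarge (σ / 2 * b + c))).exists
  exact ⟨e, he₀, by linarith, by linarith⟩

/-- A grid of `M ^ d` parameters in a cube of side `σ / 2`, a block length `R`, and the resulting
constants `B`, `η`, `τ` of a `BlockComparison`, with all error terms below `ε`; the number `η` also
bounds the entries of the `blockSeq`. -/
structure BlockParameters (d N m : ℕ) (σ V ε : ℝ) where
  (M R : ℕ)
  (B η τ : ℝ)
  M_pos : 0 < M
  le_R : N ≤ R
  B_pos : 0 < B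
  η_nonneg : 0 ≤ η
  η_le_one : η ≤ 1
  B_le : B ≤ (R : ℝ) ^ σ / N
  div_B_le : V / B ≤ η ^ m
  exp_le : Real.exp (σ / 2 * harmonic (M ^ d * R)) ≤ B * η
  exp_sub_one_le : Real.exp (σ / 2 / M * harmonic (M ^ d * R)) - 1 ≤ τ
  height_lt : (M ^ d : ℕ) * N * η < ε
  error_lt : N * (V * τ) + (M ^ d : ℕ) * N * (V * η) < ε
  error_lt_of_lt : N * (V * (1 + τ) * η) + (M ^ d : ℕ) * N * (V * η) < ε

-- With `R = M ^ e` and `η = M ^ (-(d + 1))` the errors tend to `0` as `M → ∞`, and both lower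
-- bounds on `B = R ^ σ / N` hold once `e` is large.
lemma nonempty_blockParameters (d m : ℕ) {N : ℕ} (hN : 0 < N) {σ ε : ℝ} (V : ℝ)
    (hσ : 0 < σ) (hε : 0 < ε) : Nonempty (BlockParameters d N m σ V ε) := by
  obtain ⟨e, he₀, hem, hed⟩ := exists_lt_natCast_mul ((d + 1) * m : ℕ) d (d + 1 : ℕ) hσ
  rw [← Nat.cast_add] at hed
  let τ (M : ℕ) : ℝ := Real.exp (σ / 2 * (harmonic (M ^ (d + e)) / M)) - 1
  let η (M : ℕ) : ℝ := ((M : ℝ) ^ (d + 1))⁻¹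
  have hτ : Tendsto τ atTop (𝓝 0) := by
    simpa using (((tendsto_harmonic_pow_div_atTop (d + e)).const_mul (σ / 2)).rexp).sub_const 1
  have hη : Tendsto η atTop (𝓝 0) :=
    ((tendsto_pow_atTop d.succ_ne_zero).comp tendsto_natCast_atTop_atTop).inv_tendsto_atTop
  have hqη : Tendsto (fun M : ℕ => (M ^ d : ℕ) * η M) atTop (𝓝 0) := by
    refine tendsto_inv_atTop_nhds_zero_nat.congr' ?_
    filter_upwards [eventually_gt_atTop 0] with M hM
    simp only [η, Nat.cast_pow, pow_succ]
    field_simp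
  obtain ⟨M, hM, hNM, hη₁, hVB, hexp, herrors⟩ := ((eventually_gt_atTop 0).and <|
    ((tendsto_pow_atTop he₀).eventually_ge_atTop N).and <| (hη.eventually_le_const one_pos).and <|
    (eventually_mul_rpow_le_rpow (V * N) hem).and <|
    (eventually_mul_exp_harmonic_pow_le_rpow N (half_pos hσ).le hed).and
    (eventually_errors_lt hη hτ hqη N V hε)).exists
  have hM' : (0 : ℝ) < M := by exact_mod_cast hM
  have hB : (0 : ℝ) < (M : ℝ) ^ (e * σ) := Real.rpow_pos_of_pos hM' _
  rw [Real.rpow_natCast] at hVB hexp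
  refine ⟨⟨M, M ^ e, (M : ℝ) ^ (e * σ) / N, η M, τ M, hM, hNM, by positivity, by positivity, hη₁,
    ?_, ?_, ?_, ?_, herrors.1, herrors.2.1, herrors.2.2⟩⟩
  · rw [Nat.cast_pow, Real.rpow_mul hM'.le, Real.rpow_natCast]
  · rw [inv_pow, ← pow_mul, div_div_eq_mul_div, div_le_iff₀ hB, le_inv_mul_iff₀ (by positivity)]
    linarith
  · rw [← pow_add, le_mul_inv_iff₀ (by positivity), le_div_iff₀ (by positivity)]
    linarith
  · rw [← pow_add, div_mul_eq_mul_div, mul_div_assoc]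

end Parameters

section Grid

lemma exists_fin_abs_sub_le {M : ℕ} (hM : 0 < M) {δ a b : ℝ} (hδ : 0 < δ) (hab : a ≤ b)
    (hbδ : b ≤ a + δ) : ∃ k : Fin M, |b - (a + δ / M * k)| ≤ δ / M := by
  have hM' : (0 : ℝ) < M := by exact_mod_cast hM
  obtain ⟨y, hy₀, rfl⟩ : ∃ y ≥ 0, b = a + δ / M * y :=
    ⟨(b - a) / (δ / M), div_nonneg (sub_nonneg.2 hab) (by positivity), by field_simp; ring⟩
  have hyM : y ≤ M := by
    rw [add_le_add_iff_left, div_mul_eq_mul_div, div_le_iff₀ hM'] at hbδ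
    exact le_of_mul_le_mul_left hbδ hδ
  have hceil : ⌈y⌉₊ ≤ M := Nat.ceil_le.2 hyM
  refine ⟨⟨⌈y⌉₊ - 1, by lia⟩, ?_⟩
  have hy : |y - (⌈y⌉₊ - 1 : ℕ)| ≤ 1 := by
    rcases Nat.eq_zero_or_pos ⌈y⌉₊ with h | h
    · simp [le_antisymm (Nat.ceil_eq_zero.1 h) hy₀]
    · rw [Nat.cast_pred h, abs_le]
      constructor <;> linarith [Nat.le_ceil y, Nat.ceil_lt_add_one hy₀]
  rw [add_sub_add_left_eq_sub, ← mul_sub, abs_mul, abs_of_pos (by positivity)]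
  exact mul_le_of_le_one_right (by positivity) hy

lemma exists_grid (d : ℕ) {M : ℕ} (hM : 0 < M) {δ : ℝ} (hδ : 0 < δ) (a : Fin d → ℝ) :
    ∃ Λ : ℕ → Fin d → ℝ, (∀ j t, Λ j t ∈ Set.Icc (a t) (a t + δ)) ∧
      ∀ b : Fin d → ℝ, (∀ t, b t ∈ Set.Icc (a t) (a t + δ)) →
        ∃ j ∈ Icc 1 (M ^ d), ∀ t, |b t - Λ j t| ≤ δ / M := by
  have hM' : (0 : ℝ) < M := by exact_mod_cast hM
  let node (i : Fin (M ^ d)) (t : Fin d) : ℝ := a t + δ / M * (finFunctionFinEquiv.symm i t : ℕ)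
  refine ⟨fun j => node ⟨(j - 1) % M ^ d, Nat.mod_lt _ (by positivity)⟩, fun j t => ⟨?_, ?_⟩,
    fun b hb => ?_⟩
  · exact le_add_of_nonneg_right (by positivity)
  · refine add_le_add_right ?_ _
    rw [div_mul_eq_mul_div, div_le_iff₀ hM']
    gcongr
    exact (Fin.is_lt _).le
  · choose k hk using fun t => exists_fin_abs_sub_le hM hδ (hb t).1 (hb t).2
    refine ⟨finFunctionFinEquiv k + 1, mem_Icc.2 ⟨by lia, (finFunctionFinEquiv k).is_lt⟩,
      fun t => ?_⟩
    simpa only [node, Nat.add_sub_cancel, Nat.mod_eq_of_lt (Fin.is_lt _), Fin.eta,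
      Equiv.symm_apply_apply] using hk t

end Grid

section Selection

lemma harmonic_mono : Monotone harmonic :=
  monotone_nat_of_le_succ fun n => by
    rw [harmonic_succ]
    exact le_add_of_nonneg_right (by positivity)

lemma weightProd_le_mul_exp_of_le {a b δ : ℝ} (ha : 0 ≤ a) (hb : 0 ≤ b) (hδ : |a - b| ≤ δ)
    (k : ℕ) {n n' : ℕ} (hn : n ≤ n') : weightProd (harmonicWeight a) k n ≤
      Real.exp (δ * harmonic n') * weightProd (harmonicWeight b) k n := by
  have hW := weightProd_pos (harmonicWeight_pos hb) k n
  have hδ0 : 0 ≤ δ := (abs_nonneg _).trans hδ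
  have hH : (0 : ℝ) ≤ harmonic n := by rw [harmonic]; positivity
  rw [mul_comm]
  refine (weightProd_le_mul_exp ha hb k n).trans ?_
  gcongr
  exact harmonic_mono hn

lemma abs_div_sub_one_le_exp_sub_one {x y c : ℝ} (hx : 0 < x) (hy : 0 < y)
    (hxy : x ≤ Real.exp c * y) (hyx : y ≤ Real.exp c * x) : |x / y - 1| ≤ Real.exp c - 1 := by
  have h₁ : x / y ≤ Real.exp c := (div_le_iff₀ hy).2 hxy
  have h₂ : 1 ≤ Real.exp c * (x / y) := by rwa [← mul_div_assoc, one_le_div hy]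
  rw [abs_le]
  constructor <;> nlinarith [div_pos hx hy]

namespace BlockParameters

variable {d N m : ℕ} {σ V ε : ℝ} (P : BlockParameters d N m σ V ε)

lemma B_le_weightProd (hσ : 0 ≤ σ) (hσ1 : σ ≤ 1) {a : ℝ} (hσa : σ ≤ a) {i k : ℕ} (hi : 1 ≤ i)
    (hk : k < N) : P.B ≤ weightProd (harmonicWeight a) k (i * P.R) :=
  P.B_le.trans (rpow_div_le_weightProd hσ hσ1 hσa hk (Nat.le_mul_of_pos_left _ hi))

lemma blockComparison (hσ : 0 ≤ σ) (hσ1 : σ ≤ 1) {a b : ℝ} (hσa : σ ≤ a) {Λ : ℕ → ℝ}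
    (hΛ : ∀ i, Λ i ∈ Set.Icc a (a + σ / 2)) (hb : b ∈ Set.Icc a (a + σ / 2)) {j : ℕ}
    (hj : j ∈ Icc 1 (P.M ^ d)) (hbj : |b - Λ j| ≤ σ / 2 / P.M) :
    BlockComparison (fun i => harmonicWeight (Λ i)) (harmonicWeight b) P.R (P.M ^ d) N j
      P.B P.η P.τ where
  u_pos i := harmonicWeight_pos (hσ.trans (hσa.trans (hΛ i).1))
  w_pos := harmonicWeight_pos (hσ.trans (hσa.trans hb.1))
  mem_Icc := hj
  B_pos := P.B_pos
  η_nonneg := P.η_nonneg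
  le_weightProd i hi k hk := P.B_le_weightProd hσ hσ1 (hσa.trans hb.1) hi hk
  weightProd_le i hi k := by
    have hbi : |b - Λ i| ≤ σ / 2 := by
      rw [abs_le]
      constructor <;> linarith [hb.1, hb.2, (hΛ i).1, (hΛ i).2]
    have hΛ₀ : 0 ≤ Λ i := hσ.trans (hσa.trans (hΛ i).1)
    refine (weightProd_le_mul_exp_of_le (hσ.trans (hσa.trans hb.1)) hΛ₀ hbi k
      (Nat.mul_le_mul_right P.R (mem_Icc.1 hi).2)).trans ?_
    exact mul_le_mul_of_nonneg_right P.exp_le (weightProd_pos (harmonicWeight_pos hΛ₀) _ _).le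
  abs_div_sub_one_le k := by
    have hb₀ : 0 ≤ b := hσ.trans (hσa.trans hb.1)
    have hΛ₀ : 0 ≤ Λ j := hσ.trans (hσa.trans (hΛ j).1)
    have hjR : j * P.R ≤ P.M ^ d * P.R := Nat.mul_le_mul_right P.R (mem_Icc.1 hj).2
    exact (abs_div_sub_one_le_exp_sub_one (weightProd_pos (harmonicWeight_pos hb₀) _ _)
      (weightProd_pos (harmonicWeight_pos hΛ₀) _ _)
      (weightProd_le_mul_exp_of_le hb₀ hΛ₀ hbj k hjR)
      (weightProd_le_mul_exp_of_le hΛ₀ hb₀ (abs_sub_comm b _ ▸ hbj) k hjR)).trans P.exp_sub_one_le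

end BlockParameters

variable {p : ℝ≥0∞}

lemma exists_coe_eq_blockSeq {m R q N : ℕ} {u : ℕ → ℕ → ℝ} {v : ℕ → ℂ} (hm : m ≠ 0)
    (hv : ∀ k, N ≤ k → v k = 0) : ∃ y : lpC p, ⇑y = blockSeq m R q u v := by
  have hfin : (Function.support (blockSeq m R q u v)).Finite :=
    (blockSupport R q N).finite_toSet.subset fun h hh =>
      by_contra fun hh' => hh (blockSeq_eq_zero hm hv hh')
  exact ⟨⟨_, (memℓp_zero_iff.2 hfin).of_exponent_ge zero_le⟩, rfl⟩

lemma exists_forall_apply_eq_zero {ι : Type*} [Finite ι] {x : ι → lpC p}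
    (hx : ∀ t, ∀ᶠ h in cofinite, x t h = 0) : ∀ᶠ N in atTop, ∀ t h, N ≤ h → x t h = 0 := by
  rw [Nat.cofinite_eq_atTop] at hx
  obtain ⟨N₀, hN₀⟩ := eventually_atTop.1 (eventually_all.2 hx)
  filter_upwards [eventually_ge_atTop N₀] with N hN t h hh using hN₀ h (hN.trans hh) t

variable [Fact (1 ≤ p)] {d : ℕ}

lemma IsProductShift.selectsPower {w : ℝ → ℕ → ℝ} {T : (Fin d → lpC p) →L[ℂ] (Fin d → lpC p)}
    {lam : Fin d → ℝ} (hT : IsProductShift p d w T lam) {N R q j k D : ℕ} (hNR : N ≤ R)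
    {x v : Fin d → lpC p} (hv : ∀ t h, N ≤ h → v t h = 0) {u : Fin d → ℕ → ℕ → ℝ} {B η τ : ℝ}
    (hu : ∀ t, BlockComparison (u t) (w (lam t)) R q N j B η τ)
    (hx : ∀ t h, R ≤ h → x t h = blockSeq (k + 1) R q (u t) (v t) h)
    (hη : ∀ t h, ‖blockSeq (k + 1) R q (u t) (v t) h‖ ≤ η) (hη1 : η ≤ 1) {V ε : ℝ}
    (hV : ‖v‖ ≤ V) (hε : 0 < ε) (herror : N * (V * τ) + q * N * (V * η) < ε)
    (herror' : N * (V * (1 + τ) * η) + q * N * (V * η) < ε) :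
    SelectsPower (coordMul p ℂ) (T ^ (j * R)) k D v ε x := by
  have hpow (l : ℕ) (t : Fin d) (h : ℕ) : (T ^ (j * R)) ((coordMul p ℂ x ^ l) x) t h =
      weightProd (w (lam t)) h (j * R) *
        blockSeq (k + 1) R q (u t) (v t) (h + j * R) ^ (l + 1) := by
    have hjR : R ≤ h + j * R :=
      (Nat.le_mul_of_pos_left R (mem_Icc.1 (hu t).mem_Icc).1).trans (Nat.le_add_left _ _)
    rw [hT.pow_apply, coordMul_pow_apply, hx t _ hjR, pow_succ]
  have hVt (t : Fin d) (h : ℕ) : ‖v t h‖ ≤ V :=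
    (lp.norm_apply_le_norm (zero_lt_one.trans_le Fact.out).ne' (v t) h).trans
      ((norm_le_pi_norm v t).trans hV)
  refine ⟨(pi_norm_lt_iff hε).2 fun t => ?_, fun l hl => (pi_norm_lt_iff hε).2 fun t => ?_⟩
  · exact ((hu t).norm_sub_le _ k.succ_ne_zero hNR (hv t) (hVt t) (hpow k t)).trans_lt herror
  · exact ((hu t).norm_le_of_lt _ k.succ_ne_zero hNR (hv t) (hVt t) hη1 (hη t)
      (Nat.succ_lt_succ (mem_Ioc.1 hl).1) (hpow l t)).trans_lt herror'

/-- The cube of side `σ / 2` of parameters with lowest corner `a`. -/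
def parameterBox (a : Fin d → ℝ) (σ : ℝ) : Set (Fin d → ℝ) :=
  {b | ∀ t, b t ∈ Set.Icc (a t) (a t + σ / 2)}

lemma exists_selectsPower {T : (Fin d → ℝ) → ((Fin d → lpC p) →L[ℂ] (Fin d → lpC p))}
    {a : Fin d → ℝ} {σ : ℝ} (hσ : 0 < σ) (hσ1 : σ ≤ 1) (hσa : ∀ t, σ ≤ a t)
    (hT : ∀ lam ∈ parameterBox a σ, IsProductShift p d harmonicWeight (T lam) lam) (k D : ℕ)
    {v x₀ : Fin d → lpC p} (hv : ∀ t, ∀ᶠ h in cofinite, v t h = 0)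
    (hx₀ : ∀ t, ∀ᶠ h in cofinite, x₀ t h = 0) {ε : ℝ} (hε : 0 < ε) :
    ∃ x, ‖x - x₀‖ < ε ∧ ∃ L, ∀ lam ∈ parameterBox a σ, ∃ n < L,
      SelectsPower (coordMul p ℂ) (T lam ^ (n + 1)) k D v ε x := by
  obtain ⟨N, hN, hvN, hxN⟩ := ((eventually_gt_atTop 0).and <|
    (exists_forall_apply_eq_zero hv).and (exists_forall_apply_eq_zero hx₀)).exists
  obtain ⟨P⟩ := nonempty_blockParameters d (k + 1) hN ‖v‖ hσ hε
  obtain ⟨Λ, hΛ, hgrid⟩ := exists_grid d P.M_pos (half_pos hσ) a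
  choose y hy using fun t : Fin d => exists_coe_eq_blockSeq (p := p) (R := P.R) (q := P.M ^ d)
    (u := fun i => harmonicWeight (Λ i t)) k.succ_ne_zero (hvN t)
  have hη (t : Fin d) (h : ℕ) : ‖blockSeq (k + 1) P.R (P.M ^ d)
      (fun i => harmonicWeight (Λ i t)) (v t) h‖ ≤ P.η :=
    norm_blockSeq_le k.succ_ne_zero P.le_R (hvN t)
      (fun h => (lp.norm_apply_le_norm (zero_lt_one.trans_le Fact.out).ne' (v t) h).trans
        (norm_le_pi_norm v t)) P.B_pos P.η_nonneg P.div_B_le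
      (fun i hi n hn => P.B_le_weightProd hσ.le hσ1 ((hσa t).trans (hΛ i t).1)
        (mem_Icc.1 hi).1 hn) h
  refine ⟨x₀ + y, ?_, P.M ^ d * P.R, fun lam hlam => ?_⟩
  · rw [add_sub_cancel_left, pi_norm_lt_iff hε]
    exact fun t => (norm_le_of_forall_eq_blockSeq k.succ_ne_zero (hvN t) (hη t) (y t)
      (congrFun (hy t))).trans_lt P.height_lt
  · obtain ⟨j, hj, hlamj⟩ := hgrid lam hlam
    have hjR : 0 < j * P.R := Nat.mul_pos (mem_Icc.1 hj).1 (hN.trans_le P.le_R)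
    refine ⟨j * P.R - 1, ?_, ?_⟩
    · have := Nat.mul_le_mul_right P.R (mem_Icc.1 hj).2
      lia
    · rw [Nat.sub_add_cancel hjR]
      refine (hT lam hlam).selectsPower P.le_R hvN (fun t => P.blockComparison hσ.le hσ1 (hσa t)
        (fun i => hΛ i t) (hlam t) hj (hlamj t)) (fun t h hh => ?_) hη P.η_le_one le_rfl hε
        P.error_lt P.error_lt_of_lt
      rw [Pi.add_apply, lp.coeFn_add, Pi.add_apply, hxN t h (P.le_R.trans hh), zero_add, hy]

end Selection

section HypercyclicAlgebra

variable {d : ℕ}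

lemma exists_rat_mem_parameterBox {b : Fin d → ℝ} (hb : ∀ t, 0 < b t) :
    ∃ (a : Fin d → ℚ) (σ : ℚ), 0 < σ ∧ σ ≤ 1 ∧ (∀ t, σ ≤ a t) ∧
      b ∈ parameterBox (fun t => (a t : ℝ)) σ := by
  have hsmall : ∀ᶠ σ : ℝ in 𝓝[>] 0, σ < 1 ∧ ∀ t, σ < b t / 2 :=
    nhdsWithin_le_nhds <|
      (gt_mem_nhds one_pos).and (eventually_all.2 fun t => gt_mem_nhds (half_pos (hb t)))
  obtain ⟨r, hr, hr₁, hrb⟩ := (eventually_mem_nhdsWithin.and hsmall).exists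
  obtain ⟨σ, hσ, hσr⟩ := exists_rat_btwn (Set.mem_Ioi.1 hr)
  choose a ha hab using fun t => exists_rat_btwn (show b t - σ / 2 < b t by linarith)
  refine ⟨a, σ, by exact_mod_cast hσ, by exact_mod_cast (hσr.trans hr₁).le, fun t => ?_,
    fun t => ⟨(hab t).le, by linarith [ha t]⟩⟩
  have : (σ : ℝ) ≤ a t := by linarith [ha t, hrb t]
  exact_mod_cast this

variable {p : ℝ≥0∞} [Fact (1 ≤ p)]

lemma IsProductShift.opNorm_le_of_mem_parameterBox {T : (Fin d → lpC p) →L[ℂ] (Fin d → lpC p)}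
    {a b : Fin d → ℝ} {σ : ℝ} (hσ : 0 ≤ σ) (hT : IsProductShift p d harmonicWeight T b)
    (ha : ∀ t, 0 ≤ a t) (hb : b ∈ parameterBox a σ) : ‖T‖ ≤ 1 + (‖a‖ + σ / 2) := by
  refine hT.opNorm_le (by positivity) fun t n => ?_
  have hbt : 0 ≤ b t := (ha t).trans (hb t).1
  rw [abs_of_pos (harmonicWeight_pos hbt _)]
  have hat : a t ≤ ‖a‖ := (le_abs_self _).trans (norm_le_pi_norm a t)
  linarith [harmonicWeight_succ_le hbt n, (hb t).2]

theorem exists_common_selectsPower (hp : p ≠ ⊤)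
    {T : (Fin d → ℝ) → ((Fin d → lpC p) →L[ℂ] (Fin d → lpC p))}
    (hT : ∀ lam : Fin d → ℝ, (∀ t, 0 < lam t) → IsProductShift p d harmonicWeight (T lam) lam) :
    ∃ x, ∀ lam : Fin d → ℝ, (∀ t, 0 < lam t) → ∀ k D v, ∀ ε > 0,
      ∃ n, SelectsPower (coordMul p ℂ) (T lam ^ (n + 1)) k D v ε x := by
  let ι := {c : (Fin d → ℚ) × ℚ // 0 < c.2 ∧ c.2 ≤ 1 ∧ ∀ t, c.2 ≤ c.1 t}
  let a (c : ι) (t : Fin d) : ℝ := c.1.1 t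
  let σ (c : ι) : ℝ := c.1.2
  have hσ (c : ι) : 0 < σ c := Rat.cast_pos.2 c.2.1
  have hσ1 (c : ι) : σ c ≤ 1 := (Rat.cast_le.2 c.2.2.1).trans_eq Rat.cast_one
  have hσa (c : ι) (t : Fin d) : σ c ≤ a c t := Rat.cast_le.2 (c.2.2.2 t)
  have hTbox (c : ι) : ∀ lam ∈ parameterBox (a c) (σ c),
      IsProductShift p d harmonicWeight (T lam) lam := fun lam hlam =>
    hT lam fun t => (hσ c).trans_le ((hσa c t).trans (hlam t).1)
  have : TopologicalSpace.SeparableSpace (lpC p) := separableSpace_lp hp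
  have h𝒟 : Dense (Set.pi Set.univ fun _ : Fin d => {y : lpC p | ∀ᶠ h in cofinite, y h = 0}) :=
    dense_pi _ fun _ _ => dense_setOf_eventually_eq_zero hp
  obtain ⟨x, hx⟩ := exists_forall_selectsPower (M := coordMul p ℂ) (T := T)
    (s := fun c => parameterBox (a c) (σ c)) (C := fun c => 1 + (‖a c‖ + σ c / 2))
    (fun c lam hlam => (hTbox c lam hlam).opNorm_le_of_mem_parameterBox (hσ c).le
      (fun t => (hσ c).le.trans (hσa c t)) hlam)
    h𝒟 fun c k D v hv x₀ hx₀ ε hε => exists_selectsPower (hσ c) (hσ1 c) (hσa c) (hTbox c) k D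
      (fun t => hv t trivial) (fun t => hx₀ t trivial) hε
  refine ⟨x, fun lam hlam => ?_⟩
  obtain ⟨a', σ', hσ', hσ1', hσa', hmem⟩ := exists_rat_mem_parameterBox hlam
  exact hx ⟨(a', σ'), hσ', hσ1', hσa'⟩ lam hmem

open Polynomial in
lemma commonHypercyclicAlgebraCW_of_dense_range_aeval {S : Set (Fin d → ℝ)}
    {T : (Fin d → ℝ) → ((Fin d → lpC p) →L[ℂ] (Fin d → lpC p))} {x : Fin d → lpC p} (hx₀ : x ≠ 0)
    (hx : ∀ lam ∈ S, ∀ Q : ℂ[X], Q ≠ 0 →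
      Dense (Set.range fun n : ℕ => (T lam ^ (n + 1)) (aeval (coordMul p ℂ x) Q x))) :
    CommonHypercyclicAlgebraCW p d S T := by
  refine ⟨Set.range fun Q : ℂ[X] => aeval (coordMul p ℂ x) Q x, ⟨0, by simp⟩, ?_, ?_, ?_,
    ⟨x, ⟨1, by simp⟩, hx₀⟩, ?_⟩
  · rintro _ ⟨Q, rfl⟩ _ ⟨Q', rfl⟩
    exact ⟨Q + Q', by simp⟩
  · rintro c _ ⟨Q, rfl⟩
    exact ⟨c • Q, by simp⟩
  · rintro _ ⟨Q, rfl⟩ _ ⟨Q', rfl⟩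
    refine ⟨_, ⟨X * Q * Q', rfl⟩, fun t h => ?_⟩
    simp only [aeval_coordMul_apply, eval_mul, eval_X]
    ring
  · rintro _ ⟨Q, rfl⟩ hQx lam hlam
    refine hx lam hlam Q ?_
    rintro rfl
    simp at hQx

end HypercyclicAlgebra

/-- Example 2.6 of the paper, case `X = ℓᵖ(ℕ)`, `w n (λ) = 1 + λ / n`. -/
theorem stmt_13 (d : ℕ) (hd : 1 ≤ d) (p : ℝ≥0∞) [Fact (1 ≤ p)] (hp : p ≠ ⊤)
    (T : (Fin d → ℝ) → ((Fin d → lpC p) →L[ℂ] (Fin d → lpC p)))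
    (hT : ∀ lam : Fin d → ℝ, (∀ i, 0 < lam i) →
      IsProductShift p d (fun a n => 1 + a / (n : ℝ)) (T lam) lam) :
    CommonHypercyclicAlgebraCW p d {lam | ∀ i, 0 < lam i} T := by
  obtain ⟨x, hx⟩ := exists_common_selectsPower hp hT
  have hx₀ : x ≠ 0 := by
    have : Nonempty (Fin d) := ⟨⟨0, hd⟩⟩
    have : Nontrivial (lpC p) := ⟨lp.single p 0 1, 0, fun h => by simpa using congrArg (· 0) h⟩
    obtain ⟨v, hv⟩ := exists_ne (0 : Fin d → lpC p)
    obtain ⟨n, hn⟩ := hx (fun _ => 1) (fun _ => one_pos) 0 0 v ‖v‖ (norm_pos_iff.2 hv)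
    exact hn.ne_zero
  exact commonHypercyclicAlgebraCW_of_dense_range_aeval hx₀ fun lam hlam _ hQ =>
    dense_range_aeval_of_selectsPower (hx lam hlam) hQ
end
end

section
/- Let d ≥ 1 be an integer, and for λ > 0 let w(λ) be the weight sequence w_n(λ) = (1 + 1/n)^λ for n ≥ 1. Then the family (B_{w(λ₁)} × ⋯ × B_{w(λ_d)})_{λ∈(0,∞)^d} admits a common hypercyclic algebra on c₀(ℕ)^d for the coordinatewise product. -/
open scoped ENNReal ZeroAtInfty
open Finset

noncomputable section

/-- The space `c₀(ℕ)` of complex sequences vanishing at infinity, with the sup norm. -/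
abbrev c0C : Type := C₀(ℕ, ℂ)

/-- `T` is the product operator `B_{w(lam 0)} × ⋯ × B_{w(lam (d-1))}` of weighted backward
shifts, the weight sequence of the `i`-th factor being `(w (lam i) n)_{n ≥ 1}`. -/
def IsProductShiftC0 (d : ℕ) (w : ℝ → ℕ → ℝ)
    (T : (Fin d → c0C) →L[ℂ] (Fin d → c0C)) (lam : Fin d → ℝ) : Prop :=
  ∀ (v : Fin d → c0C) (i : Fin d) (n : ℕ),
    (T v) i n = (w (lam i) (n + 1) : ℂ) * v i (n + 1)

/-- The family `T lam`, `lam ∈ S`, admits a common hypercyclic algebra for the coordinatewise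
product: there is a non-unital subalgebra `A ≠ {0}` of `(c₀(ℕ))^d` (closed under addition,
scalar multiplication and the componentwise coordinatewise product) every nonzero element of
which is a common hypercyclic vector for the family. -/
def CommonHypercyclicAlgebraCWC0 (d : ℕ) (S : Set (Fin d → ℝ))
    (T : (Fin d → ℝ) → ((Fin d → c0C) →L[ℂ] (Fin d → c0C))) : Prop :=
  ∃ A : Set (Fin d → c0C),
    (0 : Fin d → c0C) ∈ A ∧
    (∀ x ∈ A, ∀ y ∈ A, x + y ∈ A) ∧
    (∀ (c : ℂ), ∀ x ∈ A, c • x ∈ A) ∧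
    (∀ x ∈ A, ∀ y ∈ A, ∃ z ∈ A, ∀ (i : Fin d) (n : ℕ), z i n = x i n * y i n) ∧
    (∃ x ∈ A, x ≠ 0) ∧
    (∀ x ∈ A, x ≠ 0 → ∀ lam ∈ S, Dense (Set.range fun n : ℕ => ((T lam) ^ (n + 1)) x))

open Filter Topology

/-!
Nonzero elements of the algebra generated by `u` have the form `P(u) = u ^ m * Q(u)` with `m ≥ 1`
and `a = Q(0) ≠ 0`. Far out, where `u` is small, this is `a • u ^ m` up to a small relative error,
so it suffices to find `u` all of whose powers are hypercyclic for every parameter `λ`. By the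
Baire category theorem this reduces to producing, for a box `[r, S]^d` of parameters, a small
finitely supported block `b` such that some iterate of each operator in the box takes `b ^ m` close
to a given finitely supported `v`; taking `m`-th roots of coordinates, one may assume `m = 1`.

The `N`-th iterate has weights `((N + n + 1) / (n + 1)) ^ λ`. Cut the box into `Q = q ^ d` cubes of
side about `1 / q`, and for the `k`-th cube, `k ∈ [Q, 2Q)`, divide `v` by the weights of the
`k * G`-th iterate at a corner of the cube and place it at `k * G`, where `G = q ^ p`. On its own
block the error comes from `(2 * Q * G) ^ (S / q) → 1`. The later blocks are at distance at least
`G`, hence are multiplied by at most `(2 * Q) ^ S`, which their size, of order `(Q * G) ^ (-r)`,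
beats once `(d + p) * r > d * S`.
-/

section PowersOfOneVector

variable {ι : Type*}

lemma c0_norm_le_iff {x : c0C} {C : ℝ} (hC : 0 ≤ C) : ‖x‖ ≤ C ↔ ∀ n, ‖x n‖ ≤ C := by
  rw [← ZeroAtInftyContinuousMap.norm_toBCF_eq_norm]
  exact BoundedContinuousFunction.norm_le hC

lemma pi_c0_norm_le_iff [Fintype ι] {x : ι → c0C} {C : ℝ} (hC : 0 ≤ C) :
    ‖x‖ ≤ C ↔ ∀ i n, ‖x i n‖ ≤ C := by
  simp only [pi_norm_le_iff_of_nonneg hC, c0_norm_le_iff hC]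

lemma pi_c0_norm_apply_le [Fintype ι] (x : ι → c0C) (i : ι) (n : ℕ) : ‖x i n‖ ≤ ‖x‖ :=
  (pi_c0_norm_le_iff (norm_nonneg x)).1 le_rfl i n

lemma c0_tendsto_zero (x : c0C) : Tendsto x atTop (𝓝 0) := by
  simpa only [cocompact_eq_cofinite, Nat.cofinite_eq_atTop] using zero_at_infty x

/-- The basis vector `e_k` of `c₀(ℕ)`. -/
def c0Basis (k : ℕ) : c0C where
  toFun := (Pi.single k 1 : ℕ → ℂ)
  continuous_toFun := continuous_of_discreteTopology
  zero_at_infty' := by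
    rw [cocompact_eq_cofinite, Nat.cofinite_eq_atTop]
    refine tendsto_const_nhds.congr' ?_
    filter_upwards [eventually_gt_atTop k] with n hn
    exact (Pi.single_eq_of_ne (M := fun _ => ℂ) hn.ne' _).symm

lemma c0Basis_apply (k n : ℕ) : c0Basis k n = (Pi.single k 1 : ℕ → ℂ) n := rfl

/-- `u` is power universal for `W` if all powers `u ^ m`, `m ≥ 1`, are universal for the maps
`x ↦ (W N i n * x i (N + n))`. The powers are taken coordinatewise, `c₀(ℕ)` having no unit, and the
approximation times `N` are required to be arbitrarily large, so that the tail `u i (N + ·)` can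
be made small at the same time. -/
def IsPowerUniversal (W : ℕ → ι → ℕ → ℂ) (u : ι → c0C) : Prop :=
  ∀ m, m ≠ 0 → ∀ w : ι → c0C, ∀ ε > 0, ∀ N₀, ∃ N ≥ N₀, ∀ i n,
    ‖W N i n * u i (N + n) ^ m - w i n‖ ≤ ε

lemma IsPowerUniversal.ne_zero [Nonempty ι] {W : ℕ → ι → ℕ → ℂ} {u : ι → c0C}
    (hu : IsPowerUniversal W u) : u ≠ 0 := by
  rintro rfl
  obtain ⟨N, -, hN⟩ := hu 1 one_ne_zero (fun _ => c0Basis 0) (1 / 2) (by norm_num) 0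
  have := hN (Classical.arbitrary ι) 0
  norm_num [c0Basis_apply] at this

lemma exists_eq_X_pow_mul_coeff_zero_ne_zero {R : Type*} [CommRing R] {P : Polynomial R}
    (hP : P ≠ 0) (hP0 : P.coeff 0 = 0) :
    ∃ m ≠ 0, ∃ Q : Polynomial R, P = Polynomial.X ^ m * Q ∧ Q.coeff 0 ≠ 0 := by
  obtain ⟨Q, hPQ, hQ⟩ := Polynomial.exists_eq_pow_rootMultiplicity_mul_and_not_dvd P hP 0
  rw [Polynomial.C_0, sub_zero] at hPQ hQ
  have hQ0 : Q.coeff 0 ≠ 0 := mt Polynomial.X_dvd_iff.2 hQ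
  refine ⟨_, fun hm => hQ0 ?_, Q, hPQ, hQ0⟩
  rwa [hPQ, hm, pow_zero, one_mul] at hP0

lemma eventually_norm_eval_sub_coeff_zero_le [Finite ι] (u : ι → c0C) (Q : Polynomial ℂ) {η : ℝ}
    (hη : 0 < η) : ∀ᶠ n in atTop, ∀ i, ‖Q.eval (u i n) - Q.coeff 0‖ ≤ η := by
  refine eventually_all.2 fun i => ?_
  have h := (Q.continuous.tendsto 0).comp (c0_tendsto_zero (u i))
  rw [← Polynomial.coeff_zero_eq_eval_zero] at h
  filter_upwards [Metric.tendsto_nhds.1 h η hη] with n hn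
  exact (dist_eq_norm (Q.eval (u i n)) _ ▸ hn).le

lemma IsPowerUniversal.exists_norm_eval_sub_le [Finite ι] {W : ℕ → ι → ℕ → ℂ}
    {u : ι → c0C} (hu : IsPowerUniversal W u) {P : Polynomial ℂ} (hP : P ≠ 0) (hP0 : P.coeff 0 = 0)
    (w : ι → c0C) {ε : ℝ} (hε : 0 < ε) (N₀ : ℕ) :
    ∃ N ≥ N₀, ∀ i n, ‖W N i n * P.eval (u i (N + n)) - w i n‖ ≤ ε := by
  have := Fintype.ofFinite ι
  obtain ⟨m, hm, Q, rfl, ha⟩ := exists_eq_X_pow_mul_coeff_zero_ne_zero hP hP0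
  set a := Q.coeff 0
  have : 0 < ‖a‖ := norm_pos_iff.2 ha
  set B := ‖a⁻¹ • w‖ + 1
  have hB : 0 < B := by positivity
  obtain ⟨N₁, hN₁⟩ := eventually_atTop.1 <|
    eventually_norm_eval_sub_coeff_zero_le u Q (η := ε / (2 * B)) (by positivity)
  obtain ⟨N, hN, hNw⟩ := hu m hm (a⁻¹ • w) (min 1 (ε / (2 * ‖a‖))) (by positivity) (max N₀ N₁)
  refine ⟨N, le_of_max_le_left hN, fun i n => ?_⟩
  set z := u i (N + n)
  set y := W N i n * z ^ m
  have hyw : ‖y - a⁻¹ * w i n‖ ≤ min 1 (ε / (2 * ‖a‖)) := hNw i n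
  have hy : ‖y‖ ≤ B := by
    calc ‖y‖ ≤ ‖a⁻¹ * w i n‖ + ‖y - a⁻¹ * w i n‖ := norm_le_norm_add_norm_sub' _ _
      _ ≤ B := add_le_add (pi_c0_norm_apply_le (a⁻¹ • w) i n) (hyw.trans (min_le_left _ _))
  have hQ : ‖Q.eval z - a‖ ≤ ε / (2 * B) := hN₁ (N + n) (by omega) i
  have hsplit : W N i n * (Polynomial.X ^ m * Q).eval z - w i n
      = y * (Q.eval z - a) + a * (y - a⁻¹ * w i n) := by
    simp only [y, Polynomial.eval_mul, Polynomial.eval_pow, Polynomial.eval_X]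
    field_simp
    ring
  calc _ ≤ ‖y‖ * ‖Q.eval z - a‖ + ‖a‖ * ‖y - a⁻¹ * w i n‖ := by
        rw [hsplit, ← norm_mul, ← norm_mul]; exact norm_add_le _ _
    _ ≤ B * (ε / (2 * B)) + ‖a‖ * (ε / (2 * ‖a‖)) := by
        gcongr; exact hyw.trans (min_le_right _ _)
    _ = ε := by field_simp; norm_num

lemma IsPowerUniversal.dense_range_pow_succ [Finite ι] {W : ℕ → ι → ℕ → ℂ} {u : ι → c0C}
    (hu : IsPowerUniversal W u) {T : (ι → c0C) →L[ℂ] (ι → c0C)}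
    (hT : ∀ N x i n, (T ^ N) x i n = W N i n * x i (N + n)) {P : Polynomial ℂ} (hP : P ≠ 0)
    (hP0 : P.coeff 0 = 0) {x : ι → c0C} (hx : ∀ i n, x i n = P.eval (u i n)) :
    Dense (Set.range fun n : ℕ => (T ^ (n + 1)) x) := by
  have := Fintype.ofFinite ι
  refine Metric.dense_iff.2 fun w r hr => ?_
  obtain ⟨N, hN, hNw⟩ := hu.exists_norm_eval_sub_le hP hP0 w (half_pos hr) 1
  refine ⟨(T ^ N) x, ?_, N - 1, by simp only [Nat.sub_add_cancel hN]⟩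
  rw [Metric.mem_ball, dist_eq_norm]
  refine ((pi_c0_norm_le_iff (half_pos hr).le).2 fun i n => ?_).trans_lt (half_lt_self hr)
  simpa only [Pi.sub_apply, ZeroAtInftyContinuousMap.sub_apply, hT, hx] using hNw i n

lemma exists_polynomial_of_mem_adjoin_singleton {u x : ι → c0C}
    (hx : x ∈ NonUnitalAlgebra.adjoin ℂ {u}) :
    ∃ P : Polynomial ℂ, P.coeff 0 = 0 ∧ ∀ i n, x i n = P.eval (u i n) := by
  induction hx using NonUnitalAlgebra.adjoin_induction with
  | mem x hx => exact ⟨Polynomial.X, by simp, by simp [Set.mem_singleton_iff.1 hx]⟩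
  | zero => exact ⟨0, by simp⟩
  | add x y _ _ hx hy =>
    obtain ⟨⟨P, hP, hxP⟩, Q, hQ, hyQ⟩ := And.intro hx hy
    exact ⟨P + Q, by simp [hP, hQ], by simp [hxP, hyQ]⟩
  | mul x y _ _ hx hy =>
    obtain ⟨⟨P, hP, hxP⟩, Q, -, hyQ⟩ := And.intro hx hy
    exact ⟨P * Q, by simp [Polynomial.mul_coeff_zero, hP], by simp [hxP, hyQ]⟩
  | smul c x _ hx =>
    obtain ⟨P, hP, hxP⟩ := hx
    exact ⟨c • P, by simp [hP], by simp [hxP]⟩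

end PowersOfOneVector

lemma IsProductShiftC0.pow_apply {d : ℕ} {w : ℝ → ℕ → ℝ} {T : (Fin d → c0C) →L[ℂ] (Fin d → c0C)}
    {lam : Fin d → ℝ} (hT : IsProductShiftC0 d w T lam) (N : ℕ) (x : Fin d → c0C) (i : Fin d)
    (n : ℕ) : (T ^ N) x i n = (∏ k ∈ range N, w (lam i) (n + k + 1) : ℝ) * x i (N + n) := by
  induction N generalizing x with
  | zero => simp
  | succ N ih =>
    rw [pow_succ, mul_apply_eq_comp, ih, hT, prod_range_succ, Complex.ofReal_mul, mul_assoc,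
      add_comm n N, add_right_comm N 1 n]

/-- The product `∏ k < N, (1 + 1 / (n + k + 1))`, in closed form. -/
def shiftRatio (N n : ℕ) : ℝ := (N + n + 1) / (n + 1)

lemma prod_one_add_one_div_rpow (N n : ℕ) (a : ℝ) :
    ∏ k ∈ range N, (1 + 1 / ((n + k + 1 : ℕ) : ℝ)) ^ a = shiftRatio N n ^ a := by
  rw [Real.finsetProd_rpow _ _ fun k _ => by positivity]
  congr 1
  induction N with
  | zero => simp [shiftRatio, div_self (Nat.cast_add_one_ne_zero (R := ℝ) n)]
  | succ N ih =>
    rw [prod_range_succ, ih, shiftRatio, shiftRatio]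
    push_cast
    field_simp
    ring

lemma one_le_shiftRatio (N n : ℕ) : 1 ≤ shiftRatio N n := by
  rw [shiftRatio, one_le_div (by positivity)]
  linarith [N.cast_nonneg (α := ℝ)]

lemma shiftRatio_pos (N n : ℕ) : 0 < shiftRatio N n := one_pos.trans_le (one_le_shiftRatio N n)

lemma shiftRatio_antitone (N : ℕ) : Antitone (shiftRatio N) := fun n l h => by
  have hnl : (n : ℝ) ≤ l := by exact_mod_cast h
  rw [shiftRatio, shiftRatio, div_le_div_iff₀ (by positivity) (by positivity)]
  nlinarith [N.cast_nonneg (α := ℝ)]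

lemma shiftRatio_le_add_one (N n : ℕ) : shiftRatio N n ≤ N + 1 := by
  simpa [shiftRatio] using shiftRatio_antitone N n.zero_le

/-- The weights of the `N`-th iterate of the product shift with parameter `lam`
and weight sequences `(1 + 1 / n) ^ lam i`. -/
def shiftWeight {ι : Type*} (lam : ι → ℝ) (N : ℕ) (i : ι) (n : ℕ) : ℂ :=
  (shiftRatio N n ^ lam i : ℝ)

lemma norm_shiftWeight {ι : Type*} (lam : ι → ℝ) (N : ℕ) (i : ι) (n : ℕ) :
    ‖shiftWeight lam N i n‖ = shiftRatio N n ^ lam i :=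
  Complex.norm_of_nonneg (Real.rpow_nonneg (shiftRatio_pos N n).le _)

lemma IsProductShiftC0.pow_apply_eq_shiftWeight_mul {d : ℕ}
    {T : (Fin d → c0C) →L[ℂ] (Fin d → c0C)} {lam : Fin d → ℝ}
    (hT : IsProductShiftC0 d (fun a n => (1 + 1 / (n : ℝ)) ^ a) T lam) (N : ℕ) (x : Fin d → c0C)
    (i : Fin d) (n : ℕ) : (T ^ N) x i n = shiftWeight lam N i n * x i (N + n) := by
  rw [hT.pow_apply, prod_one_add_one_div_rpow, shiftWeight]

section SeparatedBlocks

variable {ι : Type*}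

/-- The sequence made of the blocks `k ∈ [Q, 2Q)`, the `k`-th of which occupies `[kG, (k+1)G)` and
is a copy of `v` divided by the weights of the `kG`-th iterate with parameter `μ k`. -/
def separatedBlocks (v : ι → ℕ → ℂ) (μ : ℕ → ι → ℝ) (G Q : ℕ) (i : ι) (n : ℕ) : ℂ :=
  if n / G ∈ Ico Q (2 * Q) then v i (n % G) / shiftWeight (μ (n / G)) (n / G * G) i (n % G) else 0

variable {v : ι → ℕ → ℂ} {μ : ℕ → ι → ℝ} {G Q L : ℕ} {r S V : ℝ}

lemma separatedBlocks_eq_zero_of_le (hG : 0 < G) (i : ι) {n : ℕ} (hn : 2 * Q * G ≤ n) :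
    separatedBlocks v μ G Q i n = 0 :=
  if_neg fun h => (Nat.lt_mul_of_div_lt (mem_Ico.1 h).2 hG).not_ge hn

lemma separatedBlocks_mul_add {k n : ℕ} (hk : k ∈ Ico Q (2 * Q)) (i : ι) (hn : n < G) :
    separatedBlocks v μ G Q i (k * G + n) = v i n / shiftWeight (μ k) (k * G) i n := by
  have hG : 0 < G := n.zero_le.trans_lt hn
  have hdiv : (k * G + n) / G = k := by
    rw [mul_comm, Nat.mul_add_div hG, Nat.div_eq_of_lt hn, add_zero]
  have hmod : (k * G + n) % G = n := Nat.mul_add_mod_of_lt hn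
  rw [separatedBlocks, hdiv, hmod, if_pos hk]

lemma mul_div_le_shiftRatio {k l : ℕ} (hk : Q ≤ k) (hl : l ≤ L) :
    (Q * G / (L + 1) : ℝ) ≤ shiftRatio (k * G) l := by
  have hQk : (Q : ℝ) ≤ k := by exact_mod_cast hk
  have hlL : (l : ℝ) ≤ L := by exact_mod_cast hl
  rw [shiftRatio]
  push_cast
  gcongr
  have : (Q * G : ℝ) ≤ k * G := by gcongr
  linarith

lemma norm_separatedBlocks_le (hG : 0 < G) (hQ : 0 < Q) (hv : ∀ i n, ‖v i n‖ ≤ V)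
    (hvL : ∀ i n, L ≤ n → v i n = 0) (hr : 0 < r) (hμ : ∀ k i, r ≤ μ k i) (i : ι) (n : ℕ) :
    ‖separatedBlocks v μ G Q i n‖ ≤ V * (Q * G / (L + 1) : ℝ) ^ (-r) := by
  have hV : 0 ≤ V := (norm_nonneg _).trans (hv i n)
  unfold separatedBlocks
  split_ifs with hk
  swap; · simpa only [norm_zero] using by positivity
  rcases le_or_gt L (n % G) with hL | hL
  · simpa only [hvL i _ hL, zero_div, norm_zero] using by positivity
  set F := shiftRatio (n / G * G) (n % G)
  calc _ = ‖v i (n % G)‖ * F ^ (-μ (n / G) i) := by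
        rw [norm_div, norm_shiftWeight, Real.rpow_neg (shiftRatio_pos _ _).le, div_eq_mul_inv]
    _ ≤ V * F ^ (-r) := by
        gcongr
        exacts [Real.rpow_nonneg (shiftRatio_pos _ _).le _, hv i _, one_le_shiftRatio _ _, hμ _ i]
    _ ≤ V * (Q * G / (L + 1) : ℝ) ^ (-r) :=
        mul_le_mul_of_nonneg_left (Real.rpow_le_rpow_of_nonpos (by positivity)
          (mul_div_le_shiftRatio (mem_Ico.1 hk).1 hL.le) (neg_nonpos.2 hr.le)) hV

lemma shiftRatio_mul_le {k n : ℕ} (h : k * G + n < 2 * Q * G) :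
    shiftRatio (k * G) n ≤ 2 * (Q * G) := by
  have h' : (k * G + n + 1 : ℝ) ≤ 2 * Q * G := by exact_mod_cast h
  rw [shiftRatio, div_le_iff₀ (by positivity)]
  push_cast
  have : (0 : ℝ) ≤ 2 * (Q * G) * n := by positivity
  linarith

lemma shiftRatio_mul_le_of_le {k n : ℕ} (h : k * G + n < 2 * Q * G) (hn : G ≤ n) :
    shiftRatio (k * G) n ≤ 2 * Q := by
  have h' : (k * G + n + 1 : ℝ) ≤ 2 * Q * G := by exact_mod_cast h
  have hn' : (G : ℝ) ≤ n := by exact_mod_cast hn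
  rw [shiftRatio, div_le_iff₀ (by positivity)]
  push_cast
  have : (2 * Q * G : ℝ) ≤ 2 * Q * n := by gcongr
  linarith [Q.cast_nonneg (α := ℝ)]

lemma norm_shiftWeight_mul_block_sub_le {k n : ℕ} {lam : ι → ℝ} {i : ι} {δ : ℝ}
    (hk : k ∈ Ico Q (2 * Q)) (hn : n < G) (hv : ‖v i n‖ ≤ V)
    (hlam : lam i ∈ Set.Icc (μ k i) (μ k i + δ)) :
    ‖shiftWeight lam (k * G) i n * separatedBlocks v μ G Q i (k * G + n) - v i n‖
      ≤ V * ((2 * (Q * G)) ^ δ - 1 : ℝ) := by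
  set F := shiftRatio (k * G) n
  have hF : 1 ≤ F := one_le_shiftRatio _ _
  have hF' : F ≤ 2 * (Q * G) := shiftRatio_mul_le <| by nlinarith [mem_Ico.1 hk]
  have hratio : shiftWeight lam (k * G) i n * separatedBlocks v μ G Q i (k * G + n) - v i n
      = v i n * ((F ^ (lam i - μ k i) - 1 : ℝ) : ℂ) := by
    rw [separatedBlocks_mul_add hk i hn, shiftWeight, shiftWeight,
      Real.rpow_sub (shiftRatio_pos _ _)]
    push_cast
    ring
  have hone : 1 ≤ F ^ (lam i - μ k i) := Real.one_le_rpow hF (sub_nonneg.2 hlam.1)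
  rw [hratio, norm_mul, Complex.norm_of_nonneg (sub_nonneg.2 hone)]
  have hδ : lam i - μ k i ≤ δ := sub_le_iff_le_add'.2 hlam.2
  have hpow : F ^ (lam i - μ k i) ≤ (2 * (Q * G)) ^ δ :=
    (Real.rpow_le_rpow_of_exponent_le hF hδ).trans <|
      Real.rpow_le_rpow (by positivity) hF' ((sub_nonneg.2 hlam.1).trans hδ)
  gcongr
  exact (norm_nonneg _).trans hv

lemma norm_shiftWeight_mul_tail_le {k n : ℕ} {lam : ι → ℝ} {i : ι} {C : ℝ}
    (hG : 0 < G) (hn : G ≤ n) (hlam : lam i ∈ Set.Icc 0 S)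
    (hC : ∀ l, ‖separatedBlocks v μ G Q i l‖ ≤ C) :
    ‖shiftWeight lam (k * G) i n * separatedBlocks v μ G Q i (k * G + n)‖ ≤ (2 * Q) ^ S * C := by
  have hC0 : 0 ≤ C := (norm_nonneg _).trans (hC 0)
  rcases le_or_gt (2 * Q * G) (k * G + n) with h | h
  · simpa only [separatedBlocks_eq_zero_of_le hG i h, mul_zero, norm_zero] using by positivity
  have hQ : (1 : ℝ) ≤ 2 * Q := (one_le_shiftRatio _ _).trans (shiftRatio_mul_le_of_le h hn)
  rw [norm_mul, norm_shiftWeight]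
  gcongr
  · calc shiftRatio (k * G) n ^ lam i ≤ (2 * Q) ^ lam i :=
          Real.rpow_le_rpow (shiftRatio_pos _ _).le (shiftRatio_mul_le_of_le h hn) hlam.1
      _ ≤ (2 * Q) ^ S := Real.rpow_le_rpow_of_exponent_le hQ hlam.2
  · exact hC _

end SeparatedBlocks

lemma exists_mem_Icc_of_mem_Ico_add {r S x : ℝ} (hx : x ∈ Set.Ico r (r + S)) {q : ℕ}
    (hq : 0 < q) : ∃ c : Fin q, x ∈ Set.Icc (r + c * (S / q)) (r + c * (S / q) + S / q) := by
  have hmesh : 0 < S / q := div_pos (by linarith [hx.1, hx.2]) (by exact_mod_cast hq)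
  have hnonneg : 0 ≤ (x - r) / (S / q) := div_nonneg (sub_nonneg.2 hx.1) hmesh.le
  have hle := (le_div_iff₀ hmesh).1 (Nat.floor_le hnonneg)
  have hlt := (div_lt_iff₀ hmesh).1 (Nat.lt_floor_add_one ((x - r) / (S / q)))
  have hfloor : ⌊(x - r) / (S / q)⌋₊ < q := by
    rw [Nat.floor_lt hnonneg, div_lt_iff₀ hmesh, mul_div_cancel₀ _ (by positivity)]
    linarith [hx.2]
  exact ⟨⟨_, hfloor⟩, by dsimp only; constructor <;> linarith⟩

lemma exists_exponent_grid {ι : Type*} [Fintype ι] (r : ℝ) {S : ℝ} (hS : 0 ≤ S) {q : ℕ}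
    (hq : 0 < q) :
    ∃ μ : ℕ → ι → ℝ, (∀ k i, r ≤ μ k i) ∧
      ∀ lam : ι → ℝ, (∀ i, lam i ∈ Set.Ico r (r + S)) →
        ∃ k ∈ Ico (q ^ Fintype.card ι) (2 * q ^ Fintype.card ι),
          ∀ i, lam i ∈ Set.Icc (μ k i) (μ k i + S / q) := by
  classical
  set Q := q ^ Fintype.card ι with hQ
  have : NeZero Q := ⟨(pow_pos hq _).ne'⟩
  let e : Fin Q ≃ (ι → Fin q) := (Fintype.equivFinOfCardEq (by simp [hQ])).symm
  refine ⟨fun k i => r + e (Fin.ofNat Q k) i * (S / q),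
    fun k i => le_add_of_nonneg_right (by positivity), fun lam hlam => ?_⟩
  choose c hc using fun i => exists_mem_Icc_of_mem_Ico_add (hlam i) hq
  have hlt := (e.symm c).isLt
  have hmod : Fin.ofNat Q (Q + e.symm c) = e.symm c := by
    ext
    rw [Fin.val_ofNat, Nat.add_mod_left, Nat.mod_eq_of_lt hlt]
  refine ⟨Q + e.symm c, mem_Ico.2 ⟨by omega, by omega⟩, fun i => ?_⟩
  simpa only [hmod, e.apply_symm_apply] using hc i

lemma tendsto_const_mul_pow_rpow_div {C : ℝ} (hC : 0 < C) (k : ℕ) (S : ℝ) :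
    Tendsto (fun q : ℕ => (C * (q : ℝ) ^ k) ^ (S / q)) atTop (𝓝 1) := by
  have hconst : Tendsto (fun q : ℕ => C ^ (S / q)) atTop (𝓝 1) := by
    simpa only [Real.rpow_zero, Function.comp_def] using
      (Real.continuousAt_const_rpow hC.ne').tendsto.comp (tendsto_const_div_atTop_nhds_zero_nat S)
  have hroot : Tendsto (fun q : ℕ => ((q : ℝ) ^ (S / q)) ^ k) atTop (𝓝 1) := by
    have := (tendsto_rpow_div_mul_add S 1 0 zero_ne_one).comp (tendsto_natCast_atTop_atTop (R := ℝ))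
    simpa [Function.comp_def] using this.pow k
  refine (one_mul (1 : ℝ) ▸ hconst.mul hroot).congr fun q => ?_
  rw [Real.mul_rpow hC.le (by positivity), ← Real.rpow_pow_comm q.cast_nonneg]

lemma tendsto_two_mul_pow_rpow_mul_div_rpow_neg {d p : ℕ} {r S C : ℝ} (hC : 0 < C)
    (h : d * S < (d + p) * r) :
    Tendsto (fun q : ℕ => (2 * (q : ℝ) ^ d) ^ S * ((q : ℝ) ^ d * (q : ℝ) ^ p / C) ^ (-r))
      atTop (𝓝 0) := by
  have hpow := ((tendsto_rpow_neg_atTop (sub_pos.2 h)).comp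
    (tendsto_natCast_atTop_atTop (R := ℝ))).const_mul ((2 : ℝ) ^ S * C ^ r)
  rw [mul_zero] at hpow
  refine hpow.congr' ?_
  filter_upwards [eventually_gt_atTop 0] with q hq
  have hq' : (0 : ℝ) < q := by exact_mod_cast hq
  have hexp : -((d + p) * r - d * S) = d * S + (d + p : ℕ) * -r := by push_cast; ring
  rw [Function.comp_apply, hexp, Real.rpow_add hq', Real.rpow_mul hq'.le, Real.rpow_mul hq'.le,
    Real.rpow_natCast, Real.rpow_natCast, ← pow_add, Real.mul_rpow zero_le_two (by positivity),
    Real.div_rpow (by positivity) hC.le, Real.rpow_neg hC.le, div_inv_eq_mul]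
  ring

section Existence

variable {ι : Type*}

lemma exists_block_parameters (d K : ℕ) {r S V ε C : ℝ} (hr : 0 < r) (hC : 0 < C) (hε : 0 < ε) :
    ∃ q > 0, ∃ G ≥ K, V * ((2 * ((q ^ d : ℕ) * G)) ^ (S / q) - 1 : ℝ) ≤ ε ∧
      (2 * (q ^ d : ℕ)) ^ S * (V * ((q ^ d : ℕ) * G / C) ^ (-r) : ℝ) ≤ ε := by
  obtain ⟨p, hp⟩ := exists_nat_gt (max 0 (d * S / r))
  have hp0 : p ≠ 0 := by rintro rfl; simp at hp
  have hpr : d * S < (d + p) * r := by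
    have := (div_lt_iff₀ hr).1 ((le_max_right _ _).trans_lt hp)
    nlinarith [mul_nonneg (d.cast_nonneg (α := ℝ)) hr.le]
  have hmain := ((tendsto_const_mul_pow_rpow_div two_pos (d + p) S).sub_const 1).const_mul V
  have htail := (tendsto_two_mul_pow_rpow_mul_div_rpow_neg hC hpr).const_mul V
  rw [sub_self, mul_zero] at hmain
  rw [mul_zero] at htail
  obtain ⟨q, hqmain, hqtail, hqK, hq⟩ := (hmain.eventually_le_const hε).and
    ((htail.eventually_le_const hε).and ((eventually_ge_atTop K).and (eventually_gt_atTop 0)))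
    |>.exists
  refine ⟨q, hq, q ^ p, hqK.trans (Nat.le_self_pow hp0 q), ?_, ?_⟩
  · simpa only [Nat.cast_pow, ← pow_add] using hqmain
  · simpa only [Nat.cast_pow, mul_left_comm] using hqtail

lemma exists_block [Finite ι] {v : ι → ℕ → ℂ} {V : ℝ} (hv : ∀ i n, ‖v i n‖ ≤ V) {L : ℕ}
    (hvL : ∀ i n, L ≤ n → v i n = 0) {r S : ℝ} (hr : 0 < r) (hS : 0 ≤ S) {ε : ℝ} (hε : 0 < ε)
    (N₀ : ℕ) :
    ∃ (b : ι → ℕ → ℂ) (M : ℕ), (∀ i, ∀ n ≥ M, b i n = 0) ∧ (∀ i n, ‖b i n‖ ≤ ε) ∧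
      ∀ lam : ι → ℝ, (∀ i, lam i ∈ Set.Icc r S) → ∃ N ∈ Icc N₀ M, ∀ i n,
        ‖shiftWeight lam N i n * b i (N + n) - v i n‖ ≤ ε := by
  have := Fintype.ofFinite ι
  obtain ⟨q, hq, G, hG, hmain, htail⟩ := exists_block_parameters (Fintype.card ι) (N₀ + L + 1)
    (V := V) (S := S) hr (L.cast_add_one_pos (α := ℝ)) hε
  obtain ⟨μ, hμ, hgrid⟩ := exists_exponent_grid (ι := ι) r hS hq
  set Q := q ^ Fintype.card ι
  have hQ : 0 < Q := pow_pos hq _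
  have hG0 : 0 < G := by omega
  have hsmall := norm_separatedBlocks_le hG0 hQ hv hvL hr hμ
  have hsmallε (i n) : ‖separatedBlocks v μ G Q i n‖ ≤ ε := by
    refine (hsmall i n).trans (htail.trans' (le_mul_of_one_le_left ?_ ?_))
    · exact (norm_nonneg _).trans (hsmall i n)
    · exact Real.one_le_rpow (by norm_cast; omega) hS
  refine ⟨separatedBlocks v μ G Q, 2 * Q * G,
    fun i n hn => separatedBlocks_eq_zero_of_le hG0 i hn, hsmallε, fun lam hlam => ?_⟩
  obtain ⟨k, hk, hkμ⟩ := hgrid lam fun i => ⟨(hlam i).1, by linarith [(hlam i).2]⟩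
  obtain ⟨hQk, hkQ⟩ := mem_Ico.1 hk
  refine ⟨k * G, mem_Icc.2 ⟨by nlinarith, Nat.mul_le_mul_right G hkQ.le⟩, fun i n => ?_⟩
  rcases lt_or_ge n G with hn | hn
  · exact (norm_shiftWeight_mul_block_sub_le hk hn (hv i n) (hkμ i)).trans hmain
  · rw [hvL i n (by omega), sub_zero]
    exact (norm_shiftWeight_mul_tail_le hG0 hn ⟨hr.le.trans (hlam i).1, (hlam i).2⟩
      (hsmall i)).trans htail

lemma exists_block_pow [Finite ι] {m : ℕ} (hm : m ≠ 0) {v : ι → ℕ → ℂ} {V : ℝ}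
    (hv : ∀ i n, ‖v i n‖ ≤ V) {L : ℕ} (hvL : ∀ i n, L ≤ n → v i n = 0) {r S : ℝ} (hr : 0 < r)
    (hS : 0 ≤ S) {ε : ℝ} (hε : 0 < ε) (N₀ : ℕ) :
    ∃ (b : ι → ℕ → ℂ) (M : ℕ), (∀ i, ∀ n ≥ M, b i n = 0) ∧ (∀ i n, ‖b i n‖ ≤ ε) ∧
      ∀ lam : ι → ℝ, (∀ i, lam i ∈ Set.Icc r S) → ∃ N ∈ Icc N₀ M, ∀ i n,
        ‖shiftWeight lam N i n * b i (N + n) ^ m - v i n‖ ≤ ε := by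
  obtain ⟨a, M, haM, haε, ha⟩ := exists_block hv hvL hr hS (lt_min hε (pow_pos hε m)) N₀
  choose b hb using fun i n => IsAlgClosed.exists_pow_nat_eq (a i n) hm.bot_lt
  refine ⟨b, M, fun i n hn => ?_, fun i n => ?_, fun lam hlam => ?_⟩
  · rw [← pow_eq_zero_iff hm, hb, haM i n hn]
  · rw [← pow_le_pow_iff_left₀ (norm_nonneg _) hε.le hm, ← norm_pow, hb]
    exact (haε i n).trans (min_le_right _ _)
  · obtain ⟨N, hN, hNv⟩ := ha lam hlam
    exact ⟨N, hN, fun i n => hb i (N + n) ▸ (hNv i n).trans (min_le_left _ _)⟩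

/-- The finitely supported vector of `c₀(ℕ)^ι` whose coordinates are those of `f` before `N`. -/
def c0Trunc (N : ℕ) (f : ι → ℕ → ℂ) : ι → c0C := fun i => ∑ n ∈ range N, f i n • c0Basis n

lemma c0Trunc_apply (N : ℕ) (f : ι → ℕ → ℂ) (i : ι) (n : ℕ) :
    c0Trunc N f i n = if n < N then f i n else 0 := by
  have : c0Trunc N f i n = ∑ k ∈ range N, f i k * (Pi.single k 1 : ℕ → ℂ) n := by
    rw [c0Trunc]
    induction N with
    | zero => simp
    | succ N ih => simp [sum_range_succ, ih, c0Basis_apply]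
  simp [this, Pi.single_apply]

lemma c0Trunc_apply_of_le {N n : ℕ} (h : N ≤ n) (f : ι → ℕ → ℂ) (i : ι) :
    c0Trunc N f i n = 0 := by
  rw [c0Trunc_apply, if_neg h.not_gt]

lemma c0Trunc_apply_of_forall_eq_zero {N : ℕ} {f : ι → ℕ → ℂ} (hf : ∀ i, ∀ n ≥ N, f i n = 0)
    (i : ι) (n : ℕ) : c0Trunc N f i n = f i n := by
  rw [c0Trunc_apply]
  split_ifs with hn
  · rfl
  · exact (hf i n (not_lt.1 hn)).symm

lemma continuous_c0Trunc (N : ℕ) : Continuous (c0Trunc (ι := ι) N) := by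
  unfold c0Trunc
  fun_prop

lemma tendsto_c0Trunc (x : ι → c0C) :
    Tendsto (fun N => c0Trunc N fun i => x i) atTop (𝓝 x) := by
  refine tendsto_pi_nhds.2 fun i => Metric.tendsto_atTop'.2 fun ε hε => ?_
  obtain ⟨L, hL⟩ := eventually_atTop.1 <|
    (c0_tendsto_zero (x i)).norm.eventually_le_const (norm_zero.trans_lt (half_pos hε))
  refine ⟨L, fun N hN => (dist_eq_norm _ (x i)).trans_lt ?_⟩
  refine ((c0_norm_le_iff (half_pos hε).le).2 fun n => ?_).trans_lt (half_lt_self hε)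
  rw [ZeroAtInftyContinuousMap.sub_apply, c0Trunc_apply]
  split_ifs with hn
  · simpa only [sub_self, norm_zero] using (half_pos hε).le
  · simpa only [zero_sub, norm_neg] using hL n (by omega)

lemma denseRange_c0Trunc :
    DenseRange fun p : ℕ × (ι → ℕ → ℂ) => c0Trunc p.1 p.2 := fun x =>
  mem_closure_of_tendsto (tendsto_c0Trunc x) (.of_forall fun N => ⟨(N, fun i => x i), rfl⟩)

lemma exists_denseRange_c0Trunc [Countable ι] :
    ∃ (L : ℕ → ℕ) (f : ℕ → ι → ℕ → ℂ), DenseRange fun k => c0Trunc (L k) (f k) := by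
  have hcont : Continuous fun p : ℕ × (ι → ℕ → ℂ) => c0Trunc p.1 p.2 :=
    continuous_prod_of_discrete_left.2 continuous_c0Trunc
  exact ⟨_, _, denseRange_c0Trunc.comp (TopologicalSpace.denseRange_denseSeq _) hcont⟩

/-- The vectors `u` such that, for all parameters in the box `[r, S]^ι`, some iterate of order
at least `N₀` of the product shift brings `u ^ m` within `ε` of `v`. -/
def powerApproximants (m : ℕ) (r S : ℝ) (v : ι → c0C) (ε : ℝ) (N₀ : ℕ) : Set (ι → c0C) :=
  {u | ∀ lam : ι → ℝ, (∀ i, lam i ∈ Set.Icc r S) → ∃ N ≥ N₀, ∀ i n,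
    ‖shiftWeight lam N i n * u i (N + n) ^ m - v i n‖ ≤ ε}

lemma continuous_toBCF_pow (m : ℕ) (i : ι) :
    Continuous fun u : ι → c0C => (u i).toBCF ^ m :=
  (ZeroAtInftyContinuousMap.isometry_toBCF.continuous.comp (continuous_apply i)).pow m

lemma eventually_norm_pow_sub_pow_le [Finite ι] (m : ℕ) (u : ι → c0C) {δ : ℝ} (hδ : 0 < δ) :
    ∀ᶠ u' in 𝓝 u, ∀ i n, ‖u' i n ^ m - u i n ^ m‖ ≤ δ := by
  refine eventually_all.2 fun i => ?_
  filter_upwards [Metric.tendsto_nhds.1 ((continuous_toBCF_pow m i).tendsto u) δ hδ] with u' hu' n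
  rw [← dist_eq_norm]
  exact (BoundedContinuousFunction.dist_coe_le_dist n).trans hu'.le

-- Only finitely many iterates occur, so their weights are uniformly bounded.
lemma mem_interior_powerApproximants [Finite ι] {m : ℕ} {r S : ℝ} {v u : ι → c0C} {ε ε' : ℝ}
    {N₀ M : ℕ} (hr : 0 ≤ r) (hε : ε' < ε)
    (hu : ∀ lam : ι → ℝ, (∀ i, lam i ∈ Set.Icc r S) → ∃ N ∈ Icc N₀ M, ∀ i n,
      ‖shiftWeight lam N i n * u i (N + n) ^ m - v i n‖ ≤ ε') :
    u ∈ interior (powerApproximants m r S v ε N₀) := by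
  have hM : 0 < (M + 1 : ℝ) ^ S := by positivity
  rw [mem_interior_iff_mem_nhds]
  filter_upwards [eventually_norm_pow_sub_pow_le m u (div_pos (sub_pos.2 hε) hM)] with u' hu'
    lam hlam
  obtain ⟨N, hN, hNv⟩ := hu lam hlam
  obtain ⟨hN₀, hNM⟩ := mem_Icc.1 hN
  refine ⟨N, hN₀, fun i n => ?_⟩
  have hW : ‖shiftWeight lam N i n‖ ≤ (M + 1 : ℝ) ^ S := by
    have hNM' : (N + 1 : ℝ) ≤ M + 1 := by gcongr
    rw [norm_shiftWeight]
    exact Real.rpow_le_rpow_of_exponent_le (one_le_shiftRatio N n) (hlam i).2 |>.trans <|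
      Real.rpow_le_rpow (shiftRatio_pos N n).le ((shiftRatio_le_add_one N n).trans hNM')
        (hr.trans ((hlam i).1.trans (hlam i).2))
  have hsplit : shiftWeight lam N i n * u' i (N + n) ^ m - v i n
      = shiftWeight lam N i n * (u' i (N + n) ^ m - u i (N + n) ^ m)
        + (shiftWeight lam N i n * u i (N + n) ^ m - v i n) := by ring
  calc _ ≤ ‖shiftWeight lam N i n‖ * ‖u' i (N + n) ^ m - u i (N + n) ^ m‖
        + ‖shiftWeight lam N i n * u i (N + n) ^ m - v i n‖ := by
        rw [hsplit, ← norm_mul]; exact norm_add_le _ _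
    _ ≤ (M + 1 : ℝ) ^ S * ((ε - ε') / (M + 1 : ℝ) ^ S) + ε' := by
        gcongr
        exacts [hu' i _, hNv i n]
    _ = ε := by rw [mul_div_cancel₀ _ hM.ne', sub_add_cancel]

lemma dense_interior_powerApproximants [Finite ι] {m : ℕ} (hm : m ≠ 0) {r S : ℝ} (hr : 0 < r)
    (hS : 0 ≤ S) (L : ℕ) (f : ι → ℕ → ℂ) {ε : ℝ} (hε : 0 < ε) (N₀ : ℕ) :
    Dense (interior (powerApproximants m r S (c0Trunc L f) ε N₀)) := by
  have := Fintype.ofFinite ι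
  refine Metric.dense_iff.2 fun x η hη => ?_
  obtain ⟨⟨L₀, f₀⟩, hx⟩ := denseRange_c0Trunc.exists_dist_lt x (half_pos hη)
  obtain ⟨b, M, hbM, hbε, hb⟩ := exists_block_pow hm (pi_c0_norm_apply_le (c0Trunc L f))
    (fun i n hn => c0Trunc_apply_of_le hn f i) hr hS (lt_min (half_pos hη) (half_pos hε))
    (max N₀ L₀)
  have hb_apply := c0Trunc_apply_of_forall_eq_zero hbM
  refine ⟨c0Trunc L₀ f₀ + c0Trunc M b, ?_, mem_interior_powerApproximants (M := M) hr.le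
    (half_lt_self hε) fun lam hlam => ?_⟩
  · have hbη : ‖c0Trunc M b‖ ≤ η / 2 := (pi_c0_norm_le_iff (half_pos hη).le).2 fun i n =>
      (hb_apply i n).symm ▸ (hbε i n).trans (min_le_left _ _)
    rw [Metric.mem_ball']
    calc _ ≤ dist x (c0Trunc L₀ f₀) + dist (c0Trunc L₀ f₀) (c0Trunc L₀ f₀ + c0Trunc M b) :=
          dist_triangle _ _ _
      _ < η / 2 + η / 2 := add_lt_add_of_lt_of_le hx (dist_self_add_right _ _ |>.trans_le hbη)
      _ = η := add_halves η
  · obtain ⟨N, hN, hNv⟩ := hb lam hlam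
    obtain ⟨hN₀, hNM⟩ := mem_Icc.1 hN
    refine ⟨N, mem_Icc.2 ⟨le_of_max_le_left hN₀, hNM⟩, fun i n => ?_⟩
    rw [Pi.add_apply, ZeroAtInftyContinuousMap.add_apply, hb_apply,
      c0Trunc_apply_of_le ((le_of_max_le_right hN₀).trans (Nat.le_add_right N n)), zero_add]
    exact (hNv i n).trans (min_le_right _ _)

lemma exists_isPowerUniversal_shiftWeight [Finite ι] :
    ∃ u : ι → c0C, ∀ lam : ι → ℝ, (∀ i, 0 < lam i) → IsPowerUniversal (shiftWeight lam) u := by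
  have := Fintype.ofFinite ι
  obtain ⟨L, f, hdense⟩ := exists_denseRange_c0Trunc (ι := ι)
  obtain ⟨u, hu⟩ := (dense_iInter_of_isOpen
    (f := fun p : ℕ × ℕ × ℕ => interior (powerApproximants (p.1 + 1) (1 / (p.2.1 + 1 : ℝ)) p.2.1
      (c0Trunc (L p.2.2) (f p.2.2)) (1 / (p.2.1 + 1 : ℝ)) p.2.1)) (fun _ => isOpen_interior)
    fun p => dense_interior_powerApproximants p.1.succ_ne_zero (by positivity)
      p.2.1.cast_nonneg _ _ (by positivity) _).nonempty
  refine ⟨u, fun lam hlam m hm w ε hε N₀ => ?_⟩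
  obtain ⟨k, hk⟩ := hdense.exists_dist_lt w (half_pos hε)
  have hinv := tendsto_one_div_add_atTop_nhds_zero_nat (𝕜 := ℝ)
  obtain ⟨R, hRlam, hlamR, hRε, hRN₀⟩ :=
    ((eventually_all.2 fun i => hinv.eventually_le_const (hlam i)).and <|
      (eventually_all.2 fun i => tendsto_natCast_atTop_atTop.eventually_ge_atTop (lam i)).and <|
      (hinv.eventually_le_const (half_pos hε)).and (eventually_ge_atTop N₀)).exists
  obtain ⟨N, hN, hNv⟩ := interior_subset (Set.mem_iInter.1 hu (m - 1, R, k)) lam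
    fun i => ⟨hRlam i, hlamR i⟩
  refine ⟨N, hRN₀.trans hN, fun i n => ?_⟩
  have hv : ‖c0Trunc (L k) (f k) i n - w i n‖ ≤ ε / 2 :=
    (pi_c0_norm_apply_le (c0Trunc (L k) (f k) - w) i n).trans (dist_eq_norm' w _ ▸ hk.le)
  have := hNv i n
  rw [Nat.sub_add_cancel (Nat.one_le_iff_ne_zero.2 hm)] at this
  calc _ ≤ _ := norm_sub_le_norm_sub_add_norm_sub _ (c0Trunc (L k) (f k) i n) _
    _ ≤ ε / 2 + ε / 2 := add_le_add (this.trans hRε) hv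
    _ = ε := add_halves ε

end Existence

/-- Example 2.6 of the paper, case `X = c₀(ℕ)`, `w n (λ) = (1 + 1/n) ^ λ`. -/
theorem stmt_14 (d : ℕ) (hd : 1 ≤ d)
    (T : (Fin d → ℝ) → ((Fin d → c0C) →L[ℂ] (Fin d → c0C)))
    (hT : ∀ lam : Fin d → ℝ, (∀ i, 0 < lam i) →
      IsProductShiftC0 d (fun a n => (1 + 1 / (n : ℝ)) ^ a) (T lam) lam) :
    CommonHypercyclicAlgebraCWC0 d {lam | ∀ i, 0 < lam i} T := by
  have : Nonempty (Fin d) := ⟨⟨0, hd⟩⟩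
  obtain ⟨u, hu⟩ := exists_isPowerUniversal_shiftWeight (ι := Fin d)
  have hu0 : u ≠ 0 := (hu 1 fun _ => one_pos).ne_zero
  refine ⟨NonUnitalAlgebra.adjoin ℂ {u}, zero_mem _, fun _ hx _ hy => add_mem hx hy,
    fun c _ hx => SMulMemClass.smul_mem c hx,
    fun x hx y hy => ⟨x * y, mul_mem hx hy, fun _ _ => rfl⟩,
    ⟨u, NonUnitalAlgebra.self_mem_adjoin_singleton ℂ u, hu0⟩, fun x hx hx0 lam hlam => ?_⟩
  obtain ⟨P, hP0, hxP⟩ := exists_polynomial_of_mem_adjoin_singleton hx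
  have hP : P ≠ 0 := by
    rintro rfl
    exact hx0 (by ext i n; simp [hxP])
  exact (hu lam hlam).dense_range_pow_succ (hT lam hlam).pow_apply_eq_shiftWeight_mul hP hP0 hxP
end
end
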